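/- arXiv:1305.3462 — 3 statements merged into one kernel-verified Lean document; each statement's English description precedes it below -/
import Mathlib

section
/- Let f : [a,b] → ℝ be ν-Hölder continuous and g : [a,b] → ℝ be μ-Hölder continuous with μ + ν > 1. Then the Young integral ∫_a^b f dg exists as a limit of Riemann–Stieltjes sums, and there is a constant K_{μ,ν} depending only on μ, ν such that |∫_a^b f dg| ≤ K_{μ,ν} ‖g‖_{a,b,μ} (‖f‖_{a,b,∞} (b−a)^μ + ‖f‖_{a,b,ν} (b−a)^{μ+ν}). -/
/-- The constant of the sewing lemma: the solution of `K = 2 ^ (1 - θ) * K + 2`. -/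
noncomputable def sewingConst (θ : ℝ) : ℝ := 2 / (1 - 2 ^ (1 - θ))

lemma two_rpow_one_sub_lt_one {θ : ℝ} (hθ : 1 < θ) : (2 : ℝ) ^ (1 - θ) < 1 :=
  Real.rpow_lt_one_of_one_lt_of_neg one_lt_two (by linarith)

lemma sewingConst_pos {θ : ℝ} (hθ : 1 < θ) : 0 < sewingConst θ :=
  div_pos two_pos (sub_pos.2 (two_rpow_one_sub_lt_one hθ))

lemma sewingConst_eq {θ : ℝ} (hθ : 1 < θ) :
    2 * (1 / 2) ^ θ * sewingConst θ + 2 = sewingConst θ := by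
  have h1 := two_rpow_one_sub_lt_one hθ
  have h2 : (2 : ℝ) * (1 / 2) ^ θ = 2 ^ (1 - θ) := by
    rw [Real.rpow_sub two_pos, Real.rpow_one, one_div, Real.inv_rpow two_pos.le, div_eq_mul_inv]
  have h3 : (1 : ℝ) - 2 ^ (1 - θ) ≠ 0 := by linarith
  rw [h2, sewingConst]
  field_simp
  ring

/-- Consecutive points of a finite sequence that straddle a given level. -/
lemma exists_le_and_le_succ {x : ℕ → ℝ} {c : ℝ} {m n : ℕ} (hmn : m < n) (hm : x m ≤ c)
    (hn : c ≤ x n) : ∃ j, m ≤ j ∧ j < n ∧ x j ≤ c ∧ c ≤ x (j + 1) := by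
  induction n, hmn using Nat.le_induction with
  | base => exact ⟨m, le_rfl, Nat.lt_succ_self m, hm, hn⟩
  | succ n hmn ih =>
    rcases le_total c (x n) with h | h
    · obtain ⟨j, h1, h2, h3, h4⟩ := ih h
      exact ⟨j, h1, by omega, h3, h4⟩
    · exact ⟨n, by omega, by omega, h, hn⟩

/-- The sum of an almost additive two-parameter function along a finite monotone sequence is close
to its value at the end points. -/
lemma abs_sum_Ico_sub_le {θ C a b : ℝ} (hθ : 1 < θ) (hC : 0 ≤ C) {A : ℝ → ℝ → ℝ}
    (hA0 : ∀ s, A s s = 0)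
    (hA : ∀ s u t, a ≤ s → s ≤ u → u ≤ t → t ≤ b → |A s t - A s u - A u t| ≤ C * (t - s) ^ θ)
    {x : ℕ → ℝ} (hx : Monotone x) (hxab : ∀ i, x i ∈ Set.Icc a b) {m n : ℕ} (hmn : m ≤ n) :
    |∑ i ∈ Finset.Ico m n, A (x i) (x (i + 1)) - A (x m) (x n)|
      ≤ sewingConst θ * C * (x n - x m) ^ θ := by
  induction hk : n - m using Nat.strong_induction_on generalizing m n with
  | _ k ih =>
  subst hk
  have hK := sewingConst_pos hθ
  have hθ0 : 0 < θ := by linarith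
  rcases hmn.eq_or_lt with rfl | hlt
  · simp [hA0, Real.zero_rpow hθ0.ne']
  have hL : x m ≤ x n := hx hmn
  obtain ⟨j, hmj, hjn, hj, hj'⟩ := exists_le_and_le_succ (x := x) (c := (x m + x n) / 2) hlt
    (by linarith) (by linarith)
  have left := ih (j - m) (by omega) hmj rfl
  have right := ih (n - (j + 1)) (by omega) (Nat.succ_le_of_lt hjn) rfl
  have half : ∀ d : ℝ, 0 ≤ d → d ≤ (1 / 2) * (x n - x m) →
      sewingConst θ * C * d ^ θ ≤ sewingConst θ * C * ((1 / 2) ^ θ * (x n - x m) ^ θ) := by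
    intro d hd0 hd
    rw [← Real.mul_rpow (by norm_num) (by linarith)]
    gcongr
  have left' := left.trans (half _ (by linarith [hx hmj]) (by linarith))
  have right' := right.trans
    (half _ (by linarith [hx (Nat.succ_le_of_lt hjn)]) (by linarith))
  have d1 := hA (x m) (x j) (x n) (hxab m).1 (hx hmj) (hx hjn.le) (hxab n).2
  have d2 := hA (x j) (x (j + 1)) (x n) (hxab j).1 (hx j.le_succ) (hx hjn) (hxab n).2
  have d2' : C * (x n - x j) ^ θ ≤ C * (x n - x m) ^ θ := by
    have := hx hmj
    have := hx hjn.le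
    gcongr
  have hsum : ∑ i ∈ Finset.Ico m n, A (x i) (x (i + 1))
      = ∑ i ∈ Finset.Ico m j, A (x i) (x (i + 1)) + A (x j) (x (j + 1))
        + ∑ i ∈ Finset.Ico (j + 1) n, A (x i) (x (i + 1)) := by
    rw [← Finset.sum_Ico_succ_top hmj, Finset.sum_Ico_consecutive _ (by omega) (by omega)]
  have hconst : sewingConst θ * C * (x n - x m) ^ θ
      = 2 * (sewingConst θ * C * ((1 / 2) ^ θ * (x n - x m) ^ θ))
        + 2 * (C * (x n - x m) ^ θ) := by
    linear_combination -(C * (x n - x m) ^ θ) * sewingConst_eq hθ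
  rw [hsum, hconst]
  rw [abs_le] at *
  constructor <;> linarith [left'.1, left'.2, right'.1, right'.2, d1.1, d1.2, d2.1, d2.2]

/-- An almost additive two-parameter function is close to an additive one on a finite set. -/
lemma exists_primitive_on_finset {θ C a b : ℝ} (hθ : 1 < θ) (hC : 0 ≤ C) {A : ℝ → ℝ → ℝ}
    (hA0 : ∀ s, A s s = 0)
    (hA : ∀ s u t, a ≤ s → s ≤ u → u ≤ t → t ≤ b → |A s t - A s u - A u t| ≤ C * (t - s) ^ θ)
    (F : Finset ℝ) (hF : ∀ y ∈ F, y ∈ Set.Icc a b) :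
    ∃ J : ℝ → ℝ, ∀ s ∈ F, ∀ t ∈ F, s ≤ t →
      |J t - J s - A s t| ≤ sewingConst θ * C * (t - s) ^ θ := by
  rcases F.eq_empty_or_nonempty with rfl | hne
  · exact ⟨0, by simp⟩
  obtain ⟨k, hk⟩ : ∃ k, F.card = k + 1 := Nat.exists_eq_succ_of_ne_zero hne.card_ne_zero
  let x : ℕ → ℝ := fun i => F.orderEmbOfFin hk ⟨min i k, by omega⟩
  have hx : Monotone x := fun i j hij =>
    (F.orderEmbOfFin hk).monotone (Fin.mk_le_mk.2 (min_le_min_right k hij))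
  have hxab : ∀ i, x i ∈ Set.Icc a b := fun i => hF _ (F.orderEmbOfFin_mem hk _)
  have hsurj : ∀ y ∈ F, ∃ i, x i = y := by
    intro y hy
    have : y ∈ Set.range (F.orderEmbOfFin hk) := by
      rw [F.range_orderEmbOfFin hk]
      exact hy
    obtain ⟨i, rfl⟩ := this
    exact ⟨i, congrArg _ (Fin.ext (min_eq_left (by omega)))⟩
  choose! idx hidx using hsurj
  refine ⟨fun y => ∑ i ∈ Finset.range (idx y), A (x i) (x (i + 1)), fun s hs t ht hst => ?_⟩
  rcases hst.eq_or_lt with rfl | hlt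
  · simp [hA0, Real.zero_rpow (by linarith : θ ≠ 0)]
  have hle : idx s ≤ idx t := by
    by_contra! h
    have := hx h.le
    rw [hidx s hs, hidx t ht] at this
    linarith
  have := abs_sum_Ico_sub_le hθ hC hA0 hA hx hxab hle
  rwa [Finset.sum_Ico_eq_sub _ hle, hidx s hs, hidx t ht] at this

/-- **Sewing lemma**: an almost additive two-parameter function is close to an additive one. -/
lemma exists_primitive {θ C a b : ℝ} (hab : a ≤ b) (hθ : 1 < θ) (hC : 0 ≤ C) {A : ℝ → ℝ → ℝ}
    (hA0 : ∀ s, A s s = 0)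
    (hA : ∀ s u t, a ≤ s → s ≤ u → u ≤ t → t ≤ b → |A s t - A s u - A u t| ≤ C * (t - s) ^ θ) :
    ∃ J : ℝ → ℝ, ∀ s t, a ≤ s → s ≤ t → t ≤ b →
      |J t - J s - A s t| ≤ sewingConst θ * C * (t - s) ^ θ := by
  have hK := sewingConst_pos hθ
  have hcpt : IsCompact (Set.univ.pi fun y : ℝ =>
      Metric.closedBall (A a y) (sewingConst θ * C * |y - a| ^ θ)) :=
    isCompact_univ_pi fun y => isCompact_closedBall _ _
  obtain ⟨J, -, hJ⟩ := hcpt.inter_iInter_nonempty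
    (fun p : {p : ℝ × ℝ // a ≤ p.1 ∧ p.1 ≤ p.2 ∧ p.2 ≤ b} => {J : ℝ → ℝ |
      |J p.1.2 - J p.1.1 - A p.1.1 p.1.2| ≤ sewingConst θ * C * (p.1.2 - p.1.1) ^ θ})
    (fun p => isClosed_le (by fun_prop) continuous_const) (by
      intro P
      classical
      let F : Finset ℝ := insert a (P.image (fun p => p.1.1) ∪ P.image (fun p => p.1.2))
      have hF : ∀ y ∈ F, y ∈ Set.Icc a b := by
        intro y hy
        simp only [F, Finset.mem_insert, Finset.mem_union, Finset.mem_image] at hy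
        rcases hy with rfl | ⟨p, -, rfl⟩ | ⟨p, -, rfl⟩
        · exact ⟨le_rfl, hab⟩
        · exact ⟨p.2.1, p.2.2.1.trans p.2.2.2⟩
        · exact ⟨p.2.1.trans p.2.2.1, p.2.2.2⟩
      obtain ⟨J, hJ⟩ := exists_primitive_on_finset hθ hC hA0 hA F hF
      refine ⟨fun y => if y ∈ F then J y - J a else A a y, fun y _ => ?_, ?_⟩
      · rw [Metric.mem_closedBall, Real.dist_eq]
        by_cases hy : y ∈ F
        · have hay := (hF y hy).1
          simp only [hy, if_true, abs_of_nonneg (sub_nonneg.2 hay)]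
          exact hJ a (by simp [F]) y hy hay
        · simp only [hy, if_false, sub_self, abs_zero]
          positivity
      · simp only [Set.mem_iInter, Set.mem_ofPred_eq]
        intro p hp
        have h1 : p.1.1 ∈ F := Finset.mem_insert_of_mem
          (Finset.mem_union_left _ (Finset.mem_image_of_mem (fun p => p.1.1) hp))
        have h2 : p.1.2 ∈ F := Finset.mem_insert_of_mem
          (Finset.mem_union_right _ (Finset.mem_image_of_mem (fun p => p.1.2) hp))
        simp only [h1, h2, if_true, sub_sub_sub_cancel_right]
        exact hJ _ h1 _ h2 p.2.2.1)
  refine ⟨J, fun s t has hst htb => ?_⟩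
  exact Set.mem_iInter.1 hJ ⟨(s, t), has, hst, htb⟩

lemma Fin.sum_succ_sub_castSucc (n : ℕ) (u : Fin (n + 1) → ℝ) :
    ∑ i : Fin n, (u i.succ - u i.castSucc) = u (Fin.last n) - u 0 := by
  have h1 := Fin.sum_univ_succ u
  have h2 := Fin.sum_univ_castSucc u
  rw [Finset.sum_sub_distrib]
  linarith

/-- If a two-parameter function is `O((t - s) ^ θ)`-close to the increments of `J` with `1 < θ`,
then its sums along partitions converge to the total increment of `J`. -/
lemma exists_mesh_abs_sum_sub_le {θ D a b : ℝ} (hab : a ≤ b) (hθ : 1 < θ) (hD : 0 ≤ D)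
    {A : ℝ → ℝ → ℝ} {J : ℝ → ℝ}
    (hJ : ∀ s t, a ≤ s → s ≤ t → t ≤ b → |J t - J s - A s t| ≤ D * (t - s) ^ θ)
    {ε : ℝ} (hε : 0 < ε) :
    ∃ δ > 0, ∀ (n : ℕ) (t : Fin (n + 1) → ℝ), Monotone t → t 0 = a → t (Fin.last n) = b →
      (∀ i : Fin n, t i.succ - t i.castSucc ≤ δ) →
      |(∑ i : Fin n, A (t i.castSucc) (t i.succ)) - (J b - J a)| ≤ ε := by
  have hB : 0 < D * (b - a) + 1 := by
    have := mul_nonneg hD (sub_nonneg.2 hab)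
    linarith
  refine ⟨(ε / (D * (b - a) + 1)) ^ (θ - 1)⁻¹, by positivity, fun n t ht h0 h1 hmesh => ?_⟩
  set δ := (ε / (D * (b - a) + 1)) ^ (θ - 1)⁻¹
  have hδ : δ ^ (θ - 1) = ε / (D * (b - a) + 1) :=
    Real.rpow_inv_rpow (by positivity) (by linarith)
  have hterm : ∀ i : Fin n,
      |A (t i.castSucc) (t i.succ) - (J (t i.succ) - J (t i.castSucc))|
        ≤ D * δ ^ (θ - 1) * (t i.succ - t i.castSucc) := by
    intro i
    have hle : t i.castSucc ≤ t i.succ := ht i.castSucc_lt_succ.le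
    have hd : 0 ≤ t i.succ - t i.castSucc := sub_nonneg.2 hle
    rw [abs_sub_comm]
    refine (hJ _ _ (h0 ▸ ht (Fin.zero_le _)) hle (h1 ▸ ht (Fin.le_last _))).trans ?_
    have : (t i.succ - t i.castSucc) ^ θ
        = (t i.succ - t i.castSucc) ^ (θ - 1) * (t i.succ - t i.castSucc) := by
      rw [← Real.rpow_add_one' hd (by linarith), sub_add_cancel]
    rw [this, ← mul_assoc]
    have := hmesh i
    gcongr
  calc |(∑ i : Fin n, A (t i.castSucc) (t i.succ)) - (J b - J a)|
      = |∑ i : Fin n, (A (t i.castSucc) (t i.succ) - (J (t i.succ) - J (t i.castSucc)))| := by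
        rw [Finset.sum_sub_distrib, Fin.sum_succ_sub_castSucc n (fun i => J (t i)), h0, h1]
    _ ≤ ∑ i : Fin n, D * δ ^ (θ - 1) * (t i.succ - t i.castSucc) :=
        (Finset.abs_sum_le_sum_abs _ _).trans (Finset.sum_le_sum fun i _ => hterm i)
    _ = ε * (D * (b - a) / (D * (b - a) + 1)) := by
        rw [← Finset.mul_sum, Fin.sum_succ_sub_castSucc, h0, h1, hδ]
        ring
    _ ≤ ε := mul_le_of_le_one_right hε.le ((div_le_one hB).2 (by linarith))

/-- The Riemann–Stieltjes germ of Hölder functions is almost additive. -/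
lemma abs_stieltjes_germ_le {μ ν a b Cf Cg : ℝ} {f g : ℝ → ℝ} (hμ : 0 < μ) (hν : 0 < ν)
    (hCf : 0 ≤ Cf) (hCg : 0 ≤ Cg)
    (hf : ∀ s t, a ≤ s → s ≤ t → t ≤ b → |f t - f s| ≤ Cf * (t - s) ^ ν)
    (hg : ∀ s t, a ≤ s → s ≤ t → t ≤ b → |g t - g s| ≤ Cg * (t - s) ^ μ)
    (s u t : ℝ) (has : a ≤ s) (hsu : s ≤ u) (hut : u ≤ t) (htb : t ≤ b) :
    |f s * (g t - g s) - f s * (g u - g s) - f u * (g t - g u)|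
      ≤ Cf * Cg * (t - s) ^ (μ + ν) := by
  have hst : 0 ≤ t - s := by linarith
  have hfu : |f u - f s| ≤ Cf * (t - s) ^ ν := by
    refine (hf s u has hsu (hut.trans htb)).trans ?_
    gcongr
  have hgt : |g t - g u| ≤ Cg * (t - s) ^ μ := by
    refine (hg u t (has.trans hsu) hut htb).trans ?_
    gcongr
  calc |f s * (g t - g s) - f s * (g u - g s) - f u * (g t - g u)|
      = |f u - f s| * |g t - g u| := by
        rw [← abs_mul, ← abs_neg]
        ring_nf
    _ ≤ (Cf * (t - s) ^ ν) * (Cg * (t - s) ^ μ) := by gcongr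
    _ = Cf * Cg * (t - s) ^ (μ + ν) := by
        rw [Real.rpow_add_of_nonneg hst hμ.le hν.le]
        ring


open Finset in
theorem stmt2 (μ ν : ℝ) (hμ : 0 < μ) (hμ1 : μ < 1) (hν : 0 < ν) (hν1 : ν < 1)
    (hμν : 1 < μ + ν) :
    ∃ K : ℝ, 0 < K ∧ ∀ (a b : ℝ) (f g : ℝ → ℝ) (Cf Cg Mf : ℝ), a < b →
      0 ≤ Cf → 0 ≤ Cg → 0 ≤ Mf →
      (∀ s t, a ≤ s → s ≤ t → t ≤ b → |f t - f s| ≤ Cf * (t - s) ^ ν) →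
      (∀ s t, a ≤ s → s ≤ t → t ≤ b → |g t - g s| ≤ Cg * (t - s) ^ μ) →
      (∀ x ∈ Set.Icc a b, |f x| ≤ Mf) →
      ∃ I : ℝ,
        (∀ ε > 0, ∃ δ > 0, ∀ (n : ℕ) (t : Fin (n + 1) → ℝ), 0 < n → Monotone t →
          t 0 = a → t (Fin.last n) = b →
          (∀ i : Fin n, t i.succ - t i.castSucc ≤ δ) →
          |(∑ i : Fin n, f (t i.castSucc) * (g (t i.succ) - g (t i.castSucc))) - I| ≤ ε) ∧
        |I| ≤ K * Cg * (Mf * (b - a) ^ μ + Cf * (b - a) ^ (μ + ν)) := by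
  have hK := sewingConst_pos hμν
  refine ⟨sewingConst (μ + ν) + 1, by positivity, ?_⟩
  intro a b f g Cf Cg Mf hab hCf hCg hMf hf hg hfM
  have hC : 0 ≤ Cf * Cg := mul_nonneg hCf hCg
  obtain ⟨J, hJ⟩ := exists_primitive (A := fun s t => f s * (g t - g s)) hab.le hμν hC
    (fun s => by simp) (abs_stieltjes_germ_le hμ hν hCf hCg hf hg)
  refine ⟨J b - J a, fun ε hε => ?_, ?_⟩
  · obtain ⟨δ, hδ, h⟩ := exists_mesh_abs_sum_sub_le hab.le hμν (mul_nonneg hK.le hC) hJ hε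
    exact ⟨δ, hδ, fun n t _ => h n t⟩
  · have hba : 0 ≤ b - a := sub_nonneg.2 hab.le
    have h1 := hJ a b le_rfl hab.le le_rfl
    have h2 : |f a * (g b - g a)| ≤ Mf * (Cg * (b - a) ^ μ) := by
      rw [abs_mul]
      exact mul_le_mul (hfM a ⟨le_rfl, hab.le⟩) (hg a b le_rfl hab.le le_rfl) (abs_nonneg _) hMf
    have h3 : |J b - J a| ≤ |J b - J a - f a * (g b - g a)| + |f a * (g b - g a)| := by
      simpa using abs_add_le (J b - J a - f a * (g b - g a)) (f a * (g b - g a))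
    have h4 : 0 ≤ sewingConst (μ + ν) * (Mf * (Cg * (b - a) ^ μ)) := by positivity
    have h5 : 0 ≤ Cf * Cg * (b - a) ^ (μ + ν) := by positivity
    linear_combination h3 + h1 + h2 + h4 + h5
end

section
/- Let ξ be an adapted process with |ξ_s| ≤ A a.s., V a standard Brownian motion, κ ∈ (0,1/2), α ∈ (0,2), z > 0, t > 0. Then E[exp(z ‖∫_0^· ξ_s dV_s‖_{0,t,κ}^α)] ≤ K_{A,κ,α,z,t} < ∞, where the constant depends only on A, κ, α, z, t. -/
open MeasureTheory ProbabilityTheory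

/-- The `κ`-Hölder seminorm of `f` on `[a,b]`. -/
noncomputable def holderSemi {E : Type*} [NormedAddCommGroup E] (f : ℝ → E) (a b κ : ℝ) : ℝ :=
  ⨆ p : {q : ℝ × ℝ // a ≤ q.1 ∧ q.1 < q.2 ∧ q.2 ≤ b},
    ‖f p.1.2 - f p.1.1‖ / (p.1.2 - p.1.1) ^ κ

/-- Increments of a martingale after time `u` are orthogonal to `ℱ u`-measurable weights. -/
lemma MeasureTheory.Martingale.integral_mul_sub_eq_zero {Ω : Type*} {m0 : MeasurableSpace Ω}
    {μ : Measure Ω} [IsProbabilityMeasure μ] {ℱ : Filtration ℝ m0} {M : ℝ → Ω → ℝ}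
    (hM : Martingale M ℱ μ) {u s : ℝ} (hus : u ≤ s) {Y : Ω → ℝ}
    (hY : StronglyMeasurable[ℱ u] Y) (hu : Integrable (fun ω => Y ω * M u ω) μ)
    (hs : Integrable (fun ω => Y ω * M s ω) μ) :
    ∫ ω, Y ω * (M s ω - M u ω) ∂μ = 0 := by
  have h : ∫ ω, Y ω * M s ω ∂μ = ∫ ω, Y ω * M u ω ∂μ := by
    have h1 : μ[Y * M s | ℱ u] =ᵐ[μ] fun ω => Y ω * M u ω := by
      filter_upwards [condExp_mul_of_stronglyMeasurable_left hY hs (hM.integrable s),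
        hM.condExp_ae_eq hus] with ω h1 h2
      rw [h1, Pi.mul_apply, h2]
    rw [← integral_congr_ae h1, integral_condExp (ℱ.le u)]
    rfl
  simp_rw [mul_sub]
  rw [integral_sub hs hu, h, sub_self]

/-- The quadratic step estimate behind the exponential bound for a continuous martingale. -/
lemma integral_mul_quadratic_increment_le {Ω : Type*} {m0 : MeasurableSpace Ω}
    {μ : Measure Ω} [IsProbabilityMeasure μ] {ℱ : Filtration ℝ m0} {Z I : ℝ → Ω → ℝ}
    (hZ : Martingale Z ℱ μ) (hM : Martingale (fun s ω => Z s ω ^ 2 - I s ω) ℱ μ)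
    {u s v : ℝ} (hus : u ≤ s) (hZu : MemLp (Z u) 2 μ) (hZs : MemLp (Z s) 2 μ)
    (hI : ∀ ω, I s ω - I u ω ≤ v) (l : ℝ) {Y : Ω → ℝ}
    (hY : StronglyMeasurable[ℱ u] Y) (hY0 : ∀ ω, 0 ≤ Y ω) {C : ℝ} (hYC : ∀ ω, Y ω ≤ C) :
    Integrable (fun ω => Y ω * (1 + l * (Z s ω - Z u ω) + (l * (Z s ω - Z u ω)) ^ 2)) μ ∧
    ∫ ω, Y ω * (1 + l * (Z s ω - Z u ω) + (l * (Z s ω - Z u ω)) ^ 2) ∂μ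
      ≤ (1 + l ^ 2 * v) * ∫ ω, Y ω ∂μ := by
  have hYm : AEStronglyMeasurable Y μ := (hY.mono (ℱ.le u)).aestronglyMeasurable
  have hb : ∀ᵐ ω ∂μ, ‖Y ω‖ ≤ C := by
    filter_upwards with ω
    rw [Real.norm_of_nonneg (hY0 ω)]
    exact hYC ω
  have bdd : ∀ {g : Ω → ℝ}, Integrable g μ → Integrable (fun ω => Y ω * g ω) μ :=
    fun hg => hg.bdd_mul hYm hb
  have iY : Integrable Y μ := by simpa using bdd (integrable_const (1 : ℝ))
  have iu := bdd (hZ.integrable u)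
  have is := bdd (hZ.integrable s)
  have iuu : Integrable (fun ω => (Y ω * Z u ω) * Z u ω) μ := by
    simpa [mul_assoc] using bdd (hZu.integrable_mul hZu)
  have ius : Integrable (fun ω => (Y ω * Z u ω) * Z s ω) μ := by
    simpa [mul_assoc] using bdd (hZu.integrable_mul hZs)
  have iMu := bdd (hM.integrable u)
  have iMs := bdd (hM.integrable s)
  have e1 := hZ.integral_mul_sub_eq_zero hus hY iu is
  have e2 := hZ.integral_mul_sub_eq_zero hus (hY.mul (hZ.stronglyMeasurable u)) iuu ius
  have e3 := hM.integral_mul_sub_eq_zero hus hY iMu iMs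
  simp only [Pi.mul_apply] at e2
  have j1 : Integrable (fun ω => Y ω * (Z s ω - Z u ω)) μ :=
    bdd ((hZ.integrable s).sub (hZ.integrable u))
  have j2 : Integrable (fun ω => Y ω * Z u ω * (Z s ω - Z u ω)) μ := by
    simp_rw [mul_sub]
    exact ius.sub iuu
  have j3 : Integrable (fun ω => Y ω * (Z s ω ^ 2 - I s ω - (Z u ω ^ 2 - I u ω))) μ :=
    bdd ((hM.integrable s).sub (hM.integrable u))
  have jD : Integrable (fun ω => Y ω * (Z s ω - Z u ω) ^ 2) μ := bdd (hZs.sub hZu).integrable_sq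
  constructor
  · refine ((iY.add (j1.const_mul l)).add (jD.const_mul (l ^ 2))).congr ?_
    filter_upwards with ω
    simp only [Pi.add_apply]
    ring
  · have hle : ∀ ω, Y ω * (1 + l * (Z s ω - Z u ω) + (l * (Z s ω - Z u ω)) ^ 2) ≤
        (((1 + l ^ 2 * v) * Y ω + l * (Y ω * (Z s ω - Z u ω)))
          + l ^ 2 * (Y ω * (Z s ω ^ 2 - I s ω - (Z u ω ^ 2 - I u ω))))
          - (2 * l ^ 2) * (Y ω * Z u ω * (Z s ω - Z u ω)) := by
      intro ω
      have : 0 ≤ l ^ 2 * (Y ω * (v - (I s ω - I u ω))) :=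
        mul_nonneg (sq_nonneg l) (mul_nonneg (hY0 ω) (sub_nonneg.2 (hI ω)))
      linarith
    have k0 := iY.const_mul (1 + l ^ 2 * v)
    have k1 := j1.const_mul l
    have k2 := j2.const_mul (2 * l ^ 2)
    have k3 := j3.const_mul (l ^ 2)
    refine (integral_mono_of_nonneg ?_ (((k0.add k1).add k3).sub k2) ?_).trans_eq ?_
    · filter_upwards with ω
      refine mul_nonneg (hY0 ω) ?_
      nlinarith [sq_nonneg (l * (Z s ω - Z u ω) + 1 / 2)]
    · filter_upwards with ω
      exact hle ω
    · simp only [Pi.add_apply, Pi.sub_apply]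
      rw [integral_sub, integral_add, integral_add k0 k1]
      · simp only [integral_const_mul, e1, e2, e3]
        ring
      · exact k0.add k1
      · exact k3
      · exact (k0.add k1).add k3
      · exact k2

/-- The exponential `exp (l * d)`, set to zero once `|l * d| > 1`. -/
noncomputable def truncExp (l d : ℝ) : ℝ := if |l * d| ≤ 1 then Real.exp (l * d) else 0

lemma truncExp_nonneg (l d : ℝ) : 0 ≤ truncExp l d := by
  unfold truncExp; split_ifs <;> positivity

lemma truncExp_le_exp_one (l d : ℝ) : truncExp l d ≤ Real.exp 1 := by
  unfold truncExp
  split_ifs with h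
  · exact Real.exp_le_exp.2 (le_of_abs_le h)
  · positivity

lemma truncExp_le_quadratic (l d : ℝ) : truncExp l d ≤ 1 + l * d + (l * d) ^ 2 := by
  unfold truncExp
  split_ifs with h
  · linarith [le_of_abs_le (Real.abs_exp_sub_one_sub_id_le h)]
  · nlinarith [sq_nonneg (l * d + 1 / 2)]

lemma measurable_truncExp (l : ℝ) : Measurable (truncExp l) := by
  unfold truncExp
  exact Measurable.ite (measurableSet_le (by fun_prop) (by fun_prop)) (by fun_prop) (by fun_prop)

/-- Products of truncated exponentials along the grid `u + j * h`. -/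
noncomputable def truncExpProd (l : ℝ) (f : ℝ → ℝ) (u h : ℝ) (k : ℕ) : ℝ :=
  ∏ j ∈ Finset.range k, truncExp l (f (u + (j + 1 : ℕ) * h) - f (u + j * h))

lemma truncExpProd_nonneg (l : ℝ) (f : ℝ → ℝ) (u h : ℝ) (k : ℕ) : 0 ≤ truncExpProd l f u h k :=
  Finset.prod_nonneg fun _ _ => truncExp_nonneg _ _

lemma truncExpProd_le (l : ℝ) (f : ℝ → ℝ) (u h : ℝ) (k : ℕ) :
    truncExpProd l f u h k ≤ Real.exp 1 ^ k := by
  refine (Finset.prod_le_prod (fun _ _ => truncExp_nonneg _ _)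
    fun _ _ => truncExp_le_exp_one _ _).trans_eq ?_
  simp

lemma stronglyMeasurable_truncExpProd {Ω : Type*} {m0 : MeasurableSpace Ω}
    {ℱ : Filtration ℝ m0} {Z : ℝ → Ω → ℝ} (hZ : StronglyAdapted ℱ Z) (l u : ℝ) {h : ℝ}
    (hh : 0 ≤ h) (k : ℕ) :
    StronglyMeasurable[ℱ (u + k * h)] fun ω => truncExpProd l (fun v => Z v ω) u h k := by
  unfold truncExpProd
  refine Finset.stronglyMeasurable_fun_prod _ fun j hj => ?_
  have hj' : j < k := Finset.mem_range.1 hj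
  have meas : ∀ i : ℕ, i ≤ k → Measurable[ℱ (u + k * h)] (Z (u + i * h)) := fun i hi =>
    ((hZ _).mono (ℱ.mono (by gcongr))).measurable
  exact ((measurable_truncExp l).comp ((meas _ hj').sub (meas _ hj'.le))).stronglyMeasurable

lemma integral_truncExpProd_le {Ω : Type*} {m0 : MeasurableSpace Ω}
    {μ : Measure Ω} [IsProbabilityMeasure μ] {ℱ : Filtration ℝ m0} {Z I : ℝ → Ω → ℝ} {t a : ℝ}
    (hZ : Martingale Z ℱ μ) (hM : Martingale (fun s ω => Z s ω ^ 2 - I s ω) ℱ μ)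
    (hZ2 : ∀ s, 0 ≤ s → s ≤ t → MemLp (Z s) 2 μ)
    (hI : ∀ u s ω, 0 ≤ u → u ≤ s → s ≤ t → I s ω - I u ω ≤ a * (s - u))
    (ha : 0 ≤ a) (l : ℝ) {u h : ℝ} (hu : 0 ≤ u) (hh : 0 ≤ h) (k : ℕ) (hk : u + k * h ≤ t) :
    ∫ ω, truncExpProd l (fun v => Z v ω) u h k ∂μ ≤ (1 + l ^ 2 * (a * h)) ^ k := by
  induction k with
  | zero => simp [truncExpProd]
  | succ k ih =>
    have hle : u + k * h ≤ u + (k + 1 : ℕ) * h := by gcongr; simp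
    have hk0 : 0 ≤ u + k * h := by positivity
    obtain ⟨hint, hstep⟩ := integral_mul_quadratic_increment_le hZ hM hle
      (hZ2 _ hk0 (hle.trans hk)) (hZ2 _ (hk0.trans hle) hk) (v := a * h)
      (fun ω => (hI _ _ ω hk0 hle hk).trans_eq (by push_cast; ring)) l
      (stronglyMeasurable_truncExpProd hZ.stronglyAdapted l u hh k)
      (fun ω => truncExpProd_nonneg _ _ _ _ _) (fun ω => truncExpProd_le _ _ _ _ _)
    refine (integral_mono_of_nonneg ?_ hint ?_).trans (hstep.trans ?_)
    · filter_upwards with ω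
      exact truncExpProd_nonneg _ _ _ _ _
    · filter_upwards with ω
      rw [truncExpProd, Finset.prod_range_succ]
      exact mul_le_mul_of_nonneg_left (truncExp_le_quadratic _ _)
        (truncExpProd_nonneg l (fun v => Z v ω) u h k)
    · rw [pow_succ' (1 + l ^ 2 * (a * h))]
      exact mul_le_mul_of_nonneg_left (ih (hle.trans hk)) (by positivity)

lemma eventually_truncExpProd_eq {f : ℝ → ℝ} (hf : Continuous f) (l : ℝ) {u s : ℝ} (hus : u ≤ s) :
    ∀ᶠ n : ℕ in Filter.atTop,
      truncExpProd l f u ((s - u) / (n + 1 : ℕ)) (n + 1) = Real.exp (l * (f s - f u)) := by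
  have huc := (isCompact_Icc (a := u) (b := s)).uniformContinuousOn_of_continuous
    (f := fun x => l * f x) (by fun_prop)
  obtain ⟨δ, hδ, H⟩ := Metric.uniformContinuousOn_iff.1 huc 1 one_pos
  have hlim : Filter.Tendsto (fun n : ℕ => (s - u) / ((n + 1 : ℕ) : ℝ)) Filter.atTop (nhds 0) :=
    (tendsto_const_div_atTop_nhds_zero_nat (s - u)).comp (Filter.tendsto_add_atTop_nat 1)
  filter_upwards [hlim.eventually_lt_const hδ] with n hn
  set h := (s - u) / ((n + 1 : ℕ) : ℝ) with hdef
  have h0 : 0 ≤ h := div_nonneg (by linarith) (by positivity)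
  have hnh : ((n + 1 : ℕ) : ℝ) * h = s - u := by rw [hdef]; field_simp
  have mem : ∀ j : ℕ, j ≤ n + 1 → u + j * h ∈ Set.Icc u s := by
    intro j hj
    have : (j : ℝ) * h ≤ ((n + 1 : ℕ) : ℝ) * h := by gcongr
    exact ⟨le_add_of_nonneg_right (by positivity), by linarith⟩
  have key : ∀ j ∈ Finset.range (n + 1), truncExp l (f (u + (j + 1 : ℕ) * h) - f (u + j * h)) =
      Real.exp (l * f (u + (j + 1 : ℕ) * h) - l * f (u + j * h)) := by
    intro j hj
    have hj' := Finset.mem_range.1 hj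
    have := H _ (mem (j + 1) hj') _ (mem j hj'.le) (by
      rw [Real.dist_eq]
      push_cast
      rwa [show u + ((j : ℝ) + 1) * h - (u + j * h) = h by ring, abs_of_nonneg h0])
    rw [Real.dist_eq, ← mul_sub] at this
    rw [truncExp, if_pos this.le, mul_sub]
  rw [truncExpProd, Finset.prod_congr rfl key, ← Real.exp_sum,
    Finset.sum_range_sub (fun j : ℕ => l * f (u + j * h)), hnh]
  simp [mul_sub]

/-- Sub-Gaussian bound for the increments of a continuous martingale whose quadratic variation
grows at rate at most `a`. -/
lemma lintegral_exp_increment_le {Ω : Type*} {m0 : MeasurableSpace Ω}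
    {μ : Measure Ω} [IsProbabilityMeasure μ] {ℱ : Filtration ℝ m0} {Z I : ℝ → Ω → ℝ} {t a : ℝ}
    (hc : ∀ ω, Continuous fun s => Z s ω)
    (hZ : Martingale Z ℱ μ) (hM : Martingale (fun s ω => Z s ω ^ 2 - I s ω) ℱ μ)
    (hZ2 : ∀ s, 0 ≤ s → s ≤ t → MemLp (Z s) 2 μ)
    (hI : ∀ u s ω, 0 ≤ u → u ≤ s → s ≤ t → I s ω - I u ω ≤ a * (s - u))
    (ha : 0 ≤ a) (l : ℝ) {u s : ℝ} (hu : 0 ≤ u) (hus : u ≤ s) (hst : s ≤ t) :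
    ∫⁻ ω, ENNReal.ofReal (Real.exp (l * (Z s ω - Z u ω))) ∂μ
      ≤ ENNReal.ofReal (Real.exp (l ^ 2 * (a * (s - u)))) := by
  let h : ℕ → ℝ := fun n => (s - u) / (n + 1 : ℕ)
  let P : ℕ → Ω → ℝ := fun n ω => truncExpProd l (fun v => Z v ω) u (h n) (n + 1)
  have h0 : ∀ n, 0 ≤ h n := fun n => div_nonneg (by linarith) (by positivity)
  have hnh : ∀ n : ℕ, ((n + 1 : ℕ) : ℝ) * h n = s - u := fun n => by simp only [h]; field_simp
  have hmeas : ∀ n, StronglyMeasurable (P n) := fun n =>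
    (stronglyMeasurable_truncExpProd hZ.stronglyAdapted l u (h0 n) (n + 1)).mono (ℱ.le _)
  have hbound : ∀ n, ∫⁻ ω, ENNReal.ofReal (P n ω) ∂μ
      ≤ ENNReal.ofReal (Real.exp (l ^ 2 * (a * (s - u)))) := by
    intro n
    have hint : Integrable (P n) μ := by
      refine Integrable.of_bound (hmeas n).aestronglyMeasurable (Real.exp 1 ^ (n + 1)) ?_
      filter_upwards with ω
      rw [Real.norm_of_nonneg (truncExpProd_nonneg _ _ _ _ _)]
      exact truncExpProd_le _ _ _ _ _
    rw [← ofReal_integral_eq_lintegral_ofReal hint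
      (by filter_upwards with ω using truncExpProd_nonneg _ _ _ _ _)]
    refine ENNReal.ofReal_le_ofReal ?_
    refine (integral_truncExpProd_le hZ hM hZ2 hI ha l hu (h0 n) (n + 1)
      (by rw [hnh]; linarith)).trans ?_
    have hb : 1 + l ^ 2 * (a * h n) ≤ Real.exp (l ^ 2 * (a * h n)) := by
      linarith [Real.add_one_le_exp (l ^ 2 * (a * h n))]
    have hpos : 0 ≤ 1 + l ^ 2 * (a * h n) := by have := h0 n; positivity
    refine (pow_le_pow_left₀ hpos hb _).trans_eq ?_
    rw [← Real.exp_nat_mul, ← hnh n]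
    congr 1
    ring
  calc ∫⁻ ω, ENNReal.ofReal (Real.exp (l * (Z s ω - Z u ω))) ∂μ
      = ∫⁻ ω, Filter.liminf (fun n => ENNReal.ofReal (P n ω)) Filter.atTop ∂μ := by
        refine lintegral_congr fun ω => ?_
        have hev : (fun n => ENNReal.ofReal (P n ω)) =ᶠ[Filter.atTop]
            fun _ => ENNReal.ofReal (Real.exp (l * (Z s ω - Z u ω))) := by
          filter_upwards [eventually_truncExpProd_eq (hc ω) l hus] with n hn
          exact congrArg ENNReal.ofReal hn
        rw [Filter.liminf_congr hev, Filter.liminf_const]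
    _ ≤ Filter.liminf (fun n => ∫⁻ ω, ENNReal.ofReal (P n ω) ∂μ) Filter.atTop :=
        lintegral_liminf_le fun n => (hmeas n).measurable.ennreal_ofReal
    _ ≤ Filter.liminf (fun _ : ℕ => ENNReal.ofReal (Real.exp (l ^ 2 * (a * (s - u)))))
          Filter.atTop := Filter.liminf_le_liminf (Filter.Eventually.of_forall hbound)
    _ = _ := Filter.liminf_const _

/-- A geometric bound on dyadic increments controls the distance to dyadic approximations. -/
lemma dist_dyadic_floor_le {g : ℝ → ℝ} (hg : Continuous g) {r M : ℝ} (hr0 : 0 ≤ r) (hr1 : r < 1)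
    (hM : 0 ≤ M)
    (H : ∀ n k : ℕ, k < 2 ^ n → |g (((k + 1 : ℕ) : ℝ) / 2 ^ n) - g ((k : ℝ) / 2 ^ n)| ≤ M * r ^ n)
    {x : ℝ} (hx0 : 0 ≤ x) (hx1 : x ≤ 1) (n : ℕ) :
    |g ((⌊x * 2 ^ n⌋₊ : ℝ) / 2 ^ n) - g x| ≤ M * r ^ n / (1 - r) := by
  have hstep : ∀ n : ℕ, dist (g ((⌊x * 2 ^ n⌋₊ : ℝ) / 2 ^ n))
      (g ((⌊x * 2 ^ (n + 1)⌋₊ : ℝ) / 2 ^ (n + 1))) ≤ M * r ^ n := by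
    intro n
    have hxn : 0 ≤ x * 2 ^ n := by positivity
    have hxn' : 0 ≤ x * 2 ^ (n + 1) := by positivity
    have lo := Nat.floor_le hxn
    have hi := Nat.lt_floor_add_one (x * 2 ^ n)
    have lo' : 2 * ⌊x * 2 ^ n⌋₊ ≤ ⌊x * 2 ^ (n + 1)⌋₊ := by
      refine Nat.le_floor ?_
      push_cast
      rw [pow_succ]
      linarith
    have hi' : ⌊x * 2 ^ (n + 1)⌋₊ < 2 * ⌊x * 2 ^ n⌋₊ + 2 := by
      rw [Nat.floor_lt hxn']
      push_cast
      rw [pow_succ]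
      linarith
    have htop : ⌊x * 2 ^ (n + 1)⌋₊ ≤ 2 ^ (n + 1) := by
      refine Nat.floor_le_of_le ?_
      push_cast
      exact mul_le_of_le_one_left (by positivity) hx1
    have heq : (⌊x * 2 ^ n⌋₊ : ℝ) / 2 ^ n = ((2 * ⌊x * 2 ^ n⌋₊ : ℕ) : ℝ) / 2 ^ (n + 1) := by
      push_cast
      rw [pow_succ]
      field_simp
    rw [heq, dist_comm, Real.dist_eq]
    rcases Nat.lt_or_ge (2 * ⌊x * 2 ^ n⌋₊) ⌊x * 2 ^ (n + 1)⌋₊ with h | h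
    · have e : ⌊x * 2 ^ (n + 1)⌋₊ = 2 * ⌊x * 2 ^ n⌋₊ + 1 := by omega
      rw [e]
      refine (H (n + 1) _ (by omega)).trans ?_
      exact mul_le_mul_of_nonneg_left (pow_le_pow_of_le_one hr0 hr1.le n.le_succ) hM
    · have e : ⌊x * 2 ^ (n + 1)⌋₊ = 2 * ⌊x * 2 ^ n⌋₊ := by omega
      rw [e, sub_self, abs_zero]
      positivity
  have hlim : Filter.Tendsto (fun n : ℕ => g ((⌊x * 2 ^ n⌋₊ : ℝ) / 2 ^ n)) Filter.atTop
      (nhds (g x)) :=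
    (hg.tendsto x).comp ((tendsto_nat_floor_mul_div_atTop hx0).comp
      (tendsto_pow_atTop_atTop_of_one_lt one_lt_two))
  exact dist_le_of_le_geometric_of_tendsto r M hr1 hstep hlim n

/-- Dyadic chaining on the unit interval. -/
lemma abs_sub_le_of_dyadic {g : ℝ → ℝ} (hg : Continuous g) {κ r M : ℝ} (hκ : 0 < κ)
    (hr : r = (1 / 2 : ℝ) ^ κ) (hM : 0 ≤ M)
    (H : ∀ n k : ℕ, k < 2 ^ n → |g (((k + 1 : ℕ) : ℝ) / 2 ^ n) - g ((k : ℝ) / 2 ^ n)| ≤ M * r ^ n)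
    {x y : ℝ} (hx0 : 0 ≤ x) (hxy : x < y) (hy1 : y ≤ 1) :
    |g y - g x| ≤ (1 + 2 / (1 - r)) / r * M * (y - x) ^ κ := by
  have hr0 : 0 < r := hr ▸ by positivity
  have hr1 : r < 1 := hr ▸ Real.rpow_lt_one (by norm_num) (by norm_num) hκ
  obtain ⟨n, hn1, hn2⟩ := exists_nat_pow_near_of_lt_one (sub_pos.2 hxy) (by linarith)
    (by norm_num : (0 : ℝ) < 1 / 2) (by norm_num)
  have hpow : r ^ (n + 1) ≤ (y - x) ^ κ := by
    rw [hr, ← Real.rpow_natCast, ← Real.rpow_mul (by norm_num), mul_comm,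
      Real.rpow_mul (by norm_num), Real.rpow_natCast]
    exact Real.rpow_le_rpow (by positivity) hn1.le hκ.le
  have h1 := dist_dyadic_floor_le hg hr0.le hr1 hM H hx0 (hxy.le.trans hy1) n
  have h2 := dist_dyadic_floor_le hg hr0.le hr1 hM H (hx0.trans hxy.le) hy1 n
  have h3 : |g ((⌊y * 2 ^ n⌋₊ : ℝ) / 2 ^ n) - g ((⌊x * 2 ^ n⌋₊ : ℝ) / 2 ^ n)| ≤ M * r ^ n := by
    have hle : ⌊x * 2 ^ n⌋₊ ≤ ⌊y * 2 ^ n⌋₊ := by gcongr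
    have hle' : ⌊y * 2 ^ n⌋₊ ≤ ⌊x * 2 ^ n⌋₊ + 1 := by
      rw [← Nat.floor_add_one (by positivity)]
      refine Nat.floor_le_floor ?_
      have : (y - x) * 2 ^ n ≤ (1 / 2) ^ n * 2 ^ n := by gcongr
      rw [← mul_pow] at this
      norm_num at this
      linarith
    have htop : ⌊y * 2 ^ n⌋₊ ≤ 2 ^ n := by
      refine Nat.floor_le_of_le ?_
      push_cast
      exact mul_le_of_le_one_left (by positivity) hy1
    rcases Nat.lt_or_ge ⌊x * 2 ^ n⌋₊ ⌊y * 2 ^ n⌋₊ with h | h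
    · have e : ⌊y * 2 ^ n⌋₊ = ⌊x * 2 ^ n⌋₊ + 1 := by omega
      rw [e]
      exact H n _ (by omega)
    · rw [le_antisymm h hle, sub_self, abs_zero]
      positivity
  have htri : |g y - g x| ≤ M * r ^ n + 2 * (M * r ^ n / (1 - r)) := by
    rw [abs_le] at *
    constructor <;> linarith
  have h1r : 0 < 1 - r := by linarith
  calc |g y - g x| ≤ (1 + 2 / (1 - r)) / r * M * r ^ (n + 1) := by
        refine htri.trans_eq ?_
        rw [pow_succ]
        field_simp
    _ ≤ _ := by gcongr

/-- The Hölder seminorm is controlled by the dyadic increments. -/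
lemma exists_holderSemi_le_of_dyadic {κ t : ℝ} (hκ : 0 < κ) (ht : 0 < t) :
    ∃ C : ℝ, 0 < C ∧ ∀ f : ℝ → ℝ, Continuous f → ∀ M : ℝ, 0 ≤ M →
      (∀ n k : ℕ, k < 2 ^ n → |f (t * (((k + 1 : ℕ) : ℝ) / 2 ^ n)) - f (t * ((k : ℝ) / 2 ^ n))|
        ≤ M * ((1 / 2 : ℝ) ^ κ) ^ n) → holderSemi f 0 t κ ≤ C * M := by
  set r := (1 / 2 : ℝ) ^ κ with hr
  have hr0 : 0 < r := by positivity
  have hr1 : 0 < 1 - r := sub_pos.2 (Real.rpow_lt_one (by norm_num) (by norm_num) hκ)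
  refine ⟨(1 + 2 / (1 - r)) / r / t ^ κ, by positivity, fun f hf M hM H => ?_⟩
  refine Real.iSup_le (fun p => ?_) (by positivity)
  obtain ⟨⟨u, s⟩, hu, hus, hst⟩ := p
  simp only at hu hus hst ⊢
  have hpos : 0 < (s - u) ^ κ := Real.rpow_pos_of_pos (sub_pos.2 hus) κ
  rw [div_le_iff₀ hpos, Real.norm_eq_abs]
  have := abs_sub_le_of_dyadic (g := fun x => f (t * x)) (by fun_prop) hκ hr hM H
    (x := u / t) (y := s / t) (by positivity) (by gcongr) ((div_le_one ht).2 hst)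
  simp only [mul_div_cancel₀ _ ht.ne'] at this
  rw [← sub_div, Real.div_rpow (by linarith) ht.le] at this
  refine this.trans_eq ?_
  ring

/-- A sub-Gaussian variable has a square-exponential moment with a universal bound. -/
lemma lintegral_exp_sq_le {Ω : Type*} {m0 : MeasurableSpace Ω} {μ : Measure Ω} {X : Ω → ℝ}
    (hX : Measurable X) {v : ℝ} (hv : 0 < v)
    (h : ∀ l : ℝ, ∫⁻ ω, ENNReal.ofReal (Real.exp (l * X ω)) ∂μ
      ≤ ENNReal.ofReal (Real.exp (l ^ 2 * v))) :
    ∫⁻ ω, ENNReal.ofReal (Real.exp (X ω ^ 2 / (8 * v))) ∂μ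
      ≤ ∑' m : ℕ, ENNReal.ofReal (2 * Real.exp 2 * Real.exp (-m)) := by
  set b := Real.sqrt v with hb
  have hb0 : 0 < b := Real.sqrt_pos.2 hv
  have hbv : b ^ 2 = v := Real.sq_sqrt hv.le
  let F : ℕ → Ω → ENNReal := fun m ω => ENNReal.ofReal (Real.exp (2 - 2 * (m : ℝ) ^ 2)) *
    (ENNReal.ofReal (Real.exp (m / b * X ω)) + ENNReal.ofReal (Real.exp (-(m / b) * X ω)))
  have hFm : ∀ m, Measurable (F m) := fun m => by fun_prop
  have hpt : ∀ ω, ENNReal.ofReal (Real.exp (X ω ^ 2 / (8 * v))) ≤ ∑' m, F m ω := by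
    intro ω
    set y := |X ω| / b with hy
    have hy0 : 0 ≤ y := by positivity
    set m := ⌊y / 4⌋₊ with hm
    refine le_trans ?_ (ENNReal.le_tsum m)
    have lo : (m : ℝ) ≤ y / 4 := Nat.floor_le (by positivity)
    have hi : y / 4 < m + 1 := Nat.lt_floor_add_one _
    have hy2 : X ω ^ 2 / (8 * v) = y ^ 2 / 8 := by
      rw [hy, div_pow, sq_abs, hbv]
      field_simp
    have hexp : X ω ^ 2 / (8 * v) ≤ (2 - 2 * (m : ℝ) ^ 2) + m * y := by
      rw [hy2]
      nlinarith
    have habs : Real.exp (m * y) ≤ Real.exp (m / b * X ω) + Real.exp (-(m / b) * X ω) := by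
      rcases abs_cases (X ω) with ⟨h1, -⟩ | ⟨h1, -⟩
      · rw [hy, h1, show (m : ℝ) * (X ω / b) = m / b * X ω by ring]
        linarith [Real.exp_pos (-(m / b) * X ω)]
      · rw [hy, h1, show (m : ℝ) * (-X ω / b) = -(m / b) * X ω by ring]
        linarith [Real.exp_pos (m / b * X ω)]
    simp only [F]
    rw [← ENNReal.ofReal_add (by positivity) (by positivity), ← ENNReal.ofReal_mul (by positivity)]
    refine ENNReal.ofReal_le_ofReal ((Real.exp_le_exp.2 hexp).trans ?_)
    rw [Real.exp_add]
    gcongr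
  calc _ ≤ ∫⁻ ω, ∑' m, F m ω ∂μ := lintegral_mono hpt
    _ = ∑' m, ∫⁻ ω, F m ω ∂μ := lintegral_tsum fun m => (hFm m).aemeasurable
    _ ≤ _ := by
      refine ENNReal.tsum_le_tsum fun m => ?_
      simp only [F]
      rw [lintegral_const_mul _ (by fun_prop), lintegral_add_left (by fun_prop)]
      refine (mul_le_mul_right (add_le_add (h _) (h _)) _).trans ?_
      rw [← ENNReal.ofReal_add (by positivity) (by positivity),
        ← ENNReal.ofReal_mul (by positivity)]
      refine ENNReal.ofReal_le_ofReal ?_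
      have e : (m / b) ^ 2 * v = (m : ℝ) ^ 2 := by rw [div_pow, hbv]; field_simp
      rw [neg_sq, e, ← two_mul, mul_left_comm, ← Real.exp_add, mul_assoc, ← Real.exp_add]
      have hm : (m : ℝ) ≤ (m : ℝ) ^ 2 := by exact_mod_cast Nat.le_self_pow two_ne_zero m
      exact mul_le_mul_of_nonneg_left (Real.exp_le_exp.2 (by linarith)) two_pos.le

lemma tsum_ofReal_mul_exp_neg_ne_top {c : ℝ} (hc : 0 ≤ c) :
    ∑' m : ℕ, ENNReal.ofReal (c * Real.exp (-m)) ≠ ⊤ := by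
  rw [← ENNReal.ofReal_tsum_of_nonneg (fun m => by positivity)
    (Real.summable_exp_neg_nat.mul_left c)]
  exact ENNReal.ofReal_ne_top

/-- Powers of order below two are dominated by small multiples of the square. -/
lemma exists_mul_rpow_le_sq {b ε α : ℝ} (hb : 0 ≤ b) (hε : 0 < ε) (hα : 0 < α) (hα2 : α < 2) :
    ∃ K : ℝ, ∀ x : ℝ, 0 ≤ x → b * x ^ α ≤ ε * x ^ 2 + K := by
  have h2 : 0 < 2 - α := by linarith
  set x0 := (b / ε) ^ (1 / (2 - α)) with hx0
  refine ⟨b * x0 ^ α, fun x hx => ?_⟩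
  rcases le_total x x0 with h | h
  · have : b * x ^ α ≤ b * x0 ^ α := by gcongr
    nlinarith [sq_nonneg x]
  · rcases hx.eq_or_lt with rfl | hxpos
    · rw [Real.zero_rpow hα.ne']
      have : 0 ≤ b * x0 ^ α := by positivity
      simpa using this
    have h1 : b / ε ≤ x ^ (2 - α) := by
      calc b / ε = x0 ^ (2 - α) := by
            rw [hx0, ← Real.rpow_mul (by positivity), one_div_mul_cancel h2.ne', Real.rpow_one]
        _ ≤ _ := by gcongr
    have h3 : x ^ 2 = x ^ (2 - α) * x ^ α := by
      rw [← Real.rpow_add hxpos, sub_add_cancel, Real.rpow_two]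
    have h4 : b ≤ ε * x ^ (2 - α) := by rwa [div_le_iff₀' hε] at h1
    have h5 : b * x ^ α ≤ ε * x ^ (2 - α) * x ^ α := by gcongr
    have h6 : 0 ≤ b * x0 ^ α := by positivity
    rw [h3]
    linarith

/-- Integrals of squares of a bounded function grow at most linearly, even when the integrals are
only defined by convention. -/
lemma intervalIntegral_sq_sub_le {f : ℝ → ℝ} {A t : ℝ}
    (hf : ∀ s, s ∈ Set.Icc (0 : ℝ) t → |f s| ≤ A) {u s : ℝ} (hu : 0 ≤ u) (hus : u ≤ s)
    (hst : s ≤ t) :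
    (∫ r in (0 : ℝ)..s, f r ^ 2) - ∫ r in (0 : ℝ)..u, f r ^ 2 ≤ A ^ 2 * (s - u) := by
  by_cases hi : IntervalIntegrable (fun r => f r ^ 2) volume 0 s
  · have hi' : IntervalIntegrable (fun r => f r ^ 2) volume 0 u := by
      refine hi.mono_set ?_
      rw [Set.uIcc_of_le hu, Set.uIcc_of_le (hu.trans hus)]
      exact Set.Icc_subset_Icc_right hus
    rw [intervalIntegral.integral_interval_sub_left hi hi']
    refine (le_abs_self _).trans ?_
    have := intervalIntegral.norm_integral_le_of_norm_le_const (a := u) (b := s)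
      (f := fun r => f r ^ 2) (C := A ^ 2) (fun r hr => by
        rw [Set.uIoc_of_le hus] at hr
        rw [Real.norm_of_nonneg (sq_nonneg _), ← sq_abs (f r)]
        exact pow_le_pow_left₀ (abs_nonneg _) (hf r ⟨hu.trans hr.1.le, hr.2.trans hst⟩) 2)
    rwa [abs_of_nonneg (sub_nonneg.2 hus), Real.norm_eq_abs] at this
  · rw [intervalIntegral.integral_undef hi]
    have h1 : 0 ≤ ∫ r in (0 : ℝ)..u, f r ^ 2 :=
      intervalIntegral.integral_nonneg hu fun r _ => sq_nonneg _
    have h2 : 0 ≤ A ^ 2 * (s - u) := mul_nonneg (sq_nonneg _) (sub_nonneg.2 hus)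
    linarith

/-- The exponent at dyadic level `n` is absorbed by the square-exponential moment there. -/
lemma exists_dyadic_exponent_le {w q b α : ℝ} (hw : 0 < w) (hq0 : 0 < q) (hq1 : q < 1)
    (hb : 0 ≤ b) (hα : 0 < α) (hα2 : α < 2) :
    ∃ K : ℝ, ∀ (n : ℕ) (x : ℝ), 0 ≤ x →
      b * x ^ α + 2 * n * x ≤ x ^ 2 / (8 * (w * q ^ n)) + K := by
  obtain ⟨K₁, hK₁⟩ := exists_mul_rpow_le_sq hb (by positivity : 0 < 1 / (16 * w)) hα hα2
  obtain ⟨K₂, hK₂⟩ := (tendsto_pow_const_mul_const_pow_of_lt_one 2 hq0.le hq1).bddAbove_range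
  refine ⟨K₁ + 16 * w * K₂, fun n x hx => ?_⟩
  have hqn : 0 < q ^ n := by positivity
  have hn : (n : ℝ) ^ 2 * q ^ n ≤ K₂ := hK₂ ⟨n, rfl⟩
  have h1 : 1 / (16 * w) * x ^ 2 ≤ x ^ 2 / (16 * (w * q ^ n)) := by
    rw [one_div_mul_eq_div]
    gcongr
    exact mul_le_of_le_one_right hw.le (pow_le_one₀ hq0.le hq1.le)
  have h2 : 2 * n * x ≤ x ^ 2 / (16 * (w * q ^ n)) + 16 * w * (n ^ 2 * q ^ n) := by
    have hv : 0 < 16 * (w * q ^ n) := by positivity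
    have h : 0 ≤ (x - 16 * (w * q ^ n) * n) ^ 2 / (16 * (w * q ^ n)) := by positivity
    have e : (x - 16 * (w * q ^ n) * n) ^ 2 / (16 * (w * q ^ n)) =
        x ^ 2 / (16 * (w * q ^ n)) - 2 * n * x + 16 * w * (n ^ 2 * q ^ n) := by
      field_simp
      ring
    linarith
  have h3 : 16 * w * (n ^ 2 * q ^ n) ≤ 16 * w * K₂ := by gcongr
  have h4 : x ^ 2 / (8 * (w * q ^ n)) =
      x ^ 2 / (16 * (w * q ^ n)) + x ^ 2 / (16 * (w * q ^ n)) := by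
    field_simp
    ring
  linarith [hK₁ x hx]

/-- Continuous processes with uniformly sub-Gaussian increments have exponential moments of every
power below two of their Hölder seminorm, with a uniform bound. -/
lemma exists_lintegral_exp_holderSemi_le {a κ α z t : ℝ} (ha : 0 < a) (hκ0 : 0 < κ)
    (hκ : κ < 1 / 2) (hα : 0 < α) (hα2 : α < 2) (hz : 0 < z) (ht : 0 < t) :
    ∃ T : ENNReal, T ≠ ⊤ ∧ ∀ (Ω : Type) (_ : MeasurableSpace Ω) (μ : Measure Ω),
      IsProbabilityMeasure μ → ∀ Z : ℝ → Ω → ℝ, (∀ s, Measurable (Z s)) →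
      (∀ ω, Continuous fun s => Z s ω) →
      (∀ l u s : ℝ, 0 ≤ u → u ≤ s → s ≤ t →
        ∫⁻ ω, ENNReal.ofReal (Real.exp (l * (Z s ω - Z u ω))) ∂μ
          ≤ ENNReal.ofReal (Real.exp (l ^ 2 * (a * (s - u))))) →
      ∫⁻ ω, ENNReal.ofReal (Real.exp (z * holderSemi (fun v => Z v ω) 0 t κ ^ α)) ∂μ ≤ T := by
  obtain ⟨C, hC, hdy⟩ := exists_holderSemi_le_of_dyadic hκ0 ht
  set r := (1 / 2 : ℝ) ^ κ with hr
  have hr0 : 0 < r := by positivity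
  set q := (1 / 2 : ℝ) / r ^ 2 with hq
  have hq0 : 0 < q := by positivity
  have hq1 : q < 1 := by
    rw [hq, div_lt_one (by positivity), hr, ← Real.rpow_natCast, ← Real.rpow_mul (by norm_num)]
    conv_lhs => rw [← Real.rpow_one (1 / 2)]
    exact Real.rpow_lt_rpow_of_exponent_gt (by norm_num) (by norm_num) (by push_cast; linarith)
  set c := 2 * C with hc
  have hc0 : 0 < c := by positivity
  obtain ⟨K, hK⟩ := exists_dyadic_exponent_le (by positivity : 0 < a * t) hq0 hq1
    (by positivity : 0 ≤ z * c ^ α) hα hα2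
  set S : ENNReal := ∑' m : ℕ, ENNReal.ofReal (2 * Real.exp 2 * Real.exp (-m)) with hS
  have hStop : S ≠ ⊤ := tsum_ofReal_mul_exp_neg_ne_top (by positivity)
  refine ⟨ENNReal.ofReal (Real.exp (z * c ^ α)) +
    (∑' n : ℕ, ENNReal.ofReal (Real.exp K * Real.exp (-n))) * S, ?_, ?_⟩
  · exact ENNReal.add_ne_top.2 ⟨ENNReal.ofReal_ne_top,
      ENNReal.mul_ne_top (tsum_ofReal_mul_exp_neg_ne_top (by positivity)) hStop⟩
  intro Ω m0 μ hμ Z hZm hZc hsub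
  let X : ℕ → ℕ → Ω → ℝ := fun n k ω =>
    (Z (t * (((k + 1 : ℕ) : ℝ) / 2 ^ n)) ω - Z (t * ((k : ℝ) / 2 ^ n)) ω) / r ^ n
  have hXm : ∀ n k, Measurable (X n k) := fun n k => ((hZm _).sub (hZm _)).div_const _
  let G : ℕ → ℕ → Ω → ENNReal := fun n k ω => ENNReal.ofReal (Real.exp (K - 2 * n)) *
    ENNReal.ofReal (Real.exp (X n k ω ^ 2 / (8 * (a * t * q ^ n))))
  have hGm : ∀ n k, Measurable (G n k) := fun n k => by
    have := hXm n k
    fun_prop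
  have hGint : ∀ n k, k < 2 ^ n →
      ∫⁻ ω, G n k ω ∂μ ≤ ENNReal.ofReal (Real.exp (K - 2 * n)) * S := by
    intro n k hk
    have := hXm n k
    simp only [G]
    rw [lintegral_const_mul _ (by fun_prop)]
    refine mul_le_mul_right (lintegral_exp_sq_le (hXm n k) (by positivity) fun l => ?_) _
    have hkn : ((k + 1 : ℕ) : ℝ) / 2 ^ n ≤ 1 := by
      rw [div_le_one (by positivity)]
      exact_mod_cast hk
    have hb := hsub (l / r ^ n) (t * ((k : ℝ) / 2 ^ n)) (t * (((k + 1 : ℕ) : ℝ) / 2 ^ n))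
      (by positivity) (by gcongr; simp) (mul_le_of_le_one_right ht.le hkn)
    have e : ∀ ω, l * X n k ω = l / r ^ n *
        (Z (t * (((k + 1 : ℕ) : ℝ) / 2 ^ n)) ω - Z (t * ((k : ℝ) / 2 ^ n)) ω) := fun ω => by
      simp only [X]
      ring
    have e' : l ^ 2 * (a * t * q ^ n) = (l / r ^ n) ^ 2 *
        (a * (t * (((k + 1 : ℕ) : ℝ) / 2 ^ n) - t * ((k : ℝ) / 2 ^ n))) := by
      rw [hq, div_pow, div_pow, div_pow, one_pow, ← pow_mul, ← pow_mul, mul_comm 2 n]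
      push_cast
      field_simp
      ring
    simp_rw [e, e']
    exact hb
  have hpt : ∀ ω, ENNReal.ofReal (Real.exp (z * holderSemi (fun v => Z v ω) 0 t κ ^ α)) ≤
      ENNReal.ofReal (Real.exp (z * c ^ α)) + ∑' n : ℕ, ∑ k ∈ Finset.range (2 ^ n), G n k ω := by
    intro ω
    set H := holderSemi (fun v => Z v ω) 0 t κ with hH
    have hH0 : 0 ≤ H := Real.iSup_nonneg fun p =>
      div_nonneg (norm_nonneg _) (Real.rpow_nonneg (sub_nonneg.2 p.2.2.1.le) _)
    rcases le_or_gt H c with hHc | hHc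
    · refine le_add_right (ENNReal.ofReal_le_ofReal (Real.exp_le_exp.2 ?_))
      gcongr
    · have hM1 : 1 < H / c := (one_lt_div hc0).2 hHc
      have hex : ∃ n k : ℕ, k < 2 ^ n ∧ H / c * r ^ n <
          |Z (t * (((k + 1 : ℕ) : ℝ) / 2 ^ n)) ω - Z (t * ((k : ℝ) / 2 ^ n)) ω| := by
        by_contra! hcon
        have := hdy (fun v => Z v ω) (hZc ω) (H / c) (by positivity) hcon
        rw [← hH, hc, show C * (H / (2 * C)) = H / 2 by field_simp] at this
        linarith
      obtain ⟨n, k, hk, hlt⟩ := hex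
      have hX : H / c < |X n k ω| := by
        simp only [X]
        rwa [abs_div, abs_of_pos (pow_pos hr0 n), lt_div_iff₀ (pow_pos hr0 n)]
      refine le_add_left (le_trans ?_ (ENNReal.le_tsum n))
      refine le_trans ?_ (Finset.single_le_sum (f := fun k => G n k ω) (fun _ _ => zero_le)
        (Finset.mem_range.2 hk))
      simp only [G]
      rw [← ENNReal.ofReal_mul (by positivity), ← Real.exp_add, ← sq_abs (X n k ω)]
      refine ENNReal.ofReal_le_ofReal (Real.exp_le_exp.2 ?_)
      have h1 : z * H ^ α ≤ z * c ^ α * |X n k ω| ^ α := by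
        rw [mul_assoc, ← Real.mul_rpow hc0.le (abs_nonneg _)]
        have : H ≤ c * |X n k ω| := ((div_lt_iff₀' hc0).1 hX).le
        gcongr
      have h2 : 2 * (n : ℝ) * 1 ≤ 2 * n * |X n k ω| := by
        gcongr
        exact (hM1.trans hX).le
      linarith [hK n |X n k ω| (abs_nonneg _)]
  calc _ ≤ ∫⁻ ω, (ENNReal.ofReal (Real.exp (z * c ^ α)) +
        ∑' n : ℕ, ∑ k ∈ Finset.range (2 ^ n), G n k ω) ∂μ := lintegral_mono hpt
    _ = ENNReal.ofReal (Real.exp (z * c ^ α)) +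
        ∑' n : ℕ, ∑ k ∈ Finset.range (2 ^ n), ∫⁻ ω, G n k ω ∂μ := by
      rw [lintegral_add_left measurable_const, lintegral_const, measure_univ, mul_one,
        lintegral_tsum fun n => (Finset.measurable_fun_sum _ fun k _ => hGm n k).aemeasurable]
      simp_rw [lintegral_finsetSum _ fun k _ => hGm _ k]
    _ ≤ _ := by
      rw [← ENNReal.tsum_mul_right]
      refine add_le_add le_rfl (ENNReal.tsum_le_tsum fun n => ?_)
      refine (Finset.sum_le_sum fun k hk => hGint n k (Finset.mem_range.1 hk)).trans ?_
      rw [Finset.sum_const, Finset.card_range, nsmul_eq_mul, ← mul_assoc]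
      refine mul_le_mul_left ?_ S
      rw [← ENNReal.ofReal_natCast, ← ENNReal.ofReal_mul (by positivity)]
      refine ENNReal.ofReal_le_ofReal ?_
      have h2 : ((2 ^ n : ℕ) : ℝ) ≤ Real.exp n := by
        push_cast
        rw [← Real.exp_one_pow]
        exact pow_le_pow_left₀ two_pos.le (by linarith [Real.add_one_le_exp (1 : ℝ)]) n
      calc ((2 ^ n : ℕ) : ℝ) * Real.exp (K - 2 * n) ≤ Real.exp n * Real.exp (K - 2 * n) := by gcongr
        _ = Real.exp K * Real.exp (-n) := by
          rw [← Real.exp_add, ← Real.exp_add]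
          congr 1
          ring

theorem stmt13 (A κ α z t : ℝ) (hA : 0 ≤ A) (hκ0 : 0 < κ) (hκ : κ < 1/2) (hα : 0 < α) (hα2 : α < 2) (hz : 0 < z) (ht : 0 < t)

    :
    ∃ K : ℝ, 0 < K ∧
    ∀ (Ω : Type) (m0 : MeasurableSpace Ω) (μ : Measure Ω)
      (_ : IsProbabilityMeasure μ) (ℱ : Filtration ℝ m0)
      (V ξ Z : ℝ → Ω → ℝ),
      -- V is a standard Brownian motion with respect to ℱ:
      (∀ ω, V 0 ω = 0) →
      (∀ ω, Continuous fun s => V s ω) →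
      Adapted ℱ V →
      (∀ u s : ℝ, 0 ≤ u → u ≤ s →
        Measure.map (fun ω => V s ω - V u ω) μ = gaussianReal 0 (Real.toNNReal (s - u))) →
      (∀ u s : ℝ, 0 ≤ u → u ≤ s →
        Indep (MeasurableSpace.comap (fun ω => V s ω - V u ω) Real.measurableSpace) (ℱ u) μ) →
      -- ξ is adapted and bounded by A on [0,t]:
      Adapted ℱ ξ →
      (∀ s ω, s ∈ Set.Icc (0:ℝ) t → |ξ s ω| ≤ A) →
      -- Z is the Itô integral ∫₀^· ξ dV, characterized as the continuous martingale
      -- vanishing at 0 whose quadratic variation is ∫₀^· ξ² dr: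
      (∀ ω, Z 0 ω = 0) →
      (∀ ω, Continuous fun s => Z s ω) →
      Martingale Z ℱ μ →
      Martingale (fun s ω => (Z s ω) ^ 2 - ∫ r in (0:ℝ)..s, (ξ r ω) ^ 2) ℱ μ →
      ∫ ω, Real.exp (z * holderSemi (fun v => Z v ω) 0 t κ ^ α) ∂μ ≤ K := by
  obtain ⟨T, hT, H⟩ := exists_lintegral_exp_holderSemi_le (a := A ^ 2 + 1) (by positivity)
    hκ0 hκ hα hα2 hz ht
  refine ⟨T.toReal + 1, by positivity, ?_⟩
  intro Ω m0 μ hμ ℱ V ξ Z _ _ _ _ _ _ hξ _ hZc hZ hM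
  have hI0 : ∀ s ω, 0 ≤ s → 0 ≤ ∫ r in (0 : ℝ)..s, (ξ r ω) ^ 2 := fun s ω hs =>
    intervalIntegral.integral_nonneg hs fun r _ => sq_nonneg _
  have hI : ∀ u s ω, 0 ≤ u → u ≤ s → s ≤ t →
      (∫ r in (0 : ℝ)..s, (ξ r ω) ^ 2) - ∫ r in (0 : ℝ)..u, (ξ r ω) ^ 2
        ≤ (A ^ 2 + 1) * (s - u) := fun u s ω hu hus hst =>
    (intervalIntegral_sq_sub_le (fun r hr => hξ r ω hr) hu hus hst).trans
      (mul_le_mul_of_nonneg_right (by linarith) (sub_nonneg.2 hus))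
  have hZm : ∀ s, StronglyMeasurable (Z s) := fun s => (hZ.stronglyMeasurable s).mono (ℱ.le s)
  have hZ2 : ∀ s, 0 ≤ s → s ≤ t → MemLp (Z s) 2 μ := by
    intro s hs hst
    rw [memLp_two_iff_integrable_sq (hZm s).aestronglyMeasurable]
    have hMs := hM.integrable s
    have hIm : AEStronglyMeasurable (fun ω => ∫ r in (0 : ℝ)..s, (ξ r ω) ^ 2) μ := by
      refine (((hZm s).pow 2).aestronglyMeasurable.sub hMs.aestronglyMeasurable).congr ?_
      filter_upwards with ω
      simp
    have hIi : Integrable (fun ω => ∫ r in (0 : ℝ)..s, (ξ r ω) ^ 2) μ := by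
      refine Integrable.of_bound hIm ((A ^ 2 + 1) * s) ?_
      filter_upwards with ω
      rw [Real.norm_of_nonneg (hI0 s ω hs)]
      simpa using hI 0 s ω le_rfl hs hst
    refine (hMs.add hIi).congr ?_
    filter_upwards with ω
    simp
  have hle := H Ω m0 μ hμ Z (fun s => (hZm s).measurable) hZc fun l u s hu hus hst =>
    lintegral_exp_increment_le hZc hZ hM hZ2 hI (by positivity) l hu hus hst
  have hnorm := norm_integral_le_lintegral_norm (μ := μ)
    fun ω => Real.exp (z * holderSemi (fun v => Z v ω) 0 t κ ^ α)
  simp only [Real.norm_eq_abs, Real.abs_exp] at hnorm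
  linarith [le_abs_self (∫ ω, Real.exp (z * holderSemi (fun v => Z v ω) 0 t κ ^ α) ∂μ),
    ENNReal.toReal_mono hT hle]
end

section
/- Let γ : [0,T] → ℝ^l be μ-Hölder with μ > 1/2, θ ∈ (1−μ, 1/2), and let Y solve the Young differential equation Y_t = Y_0 + ∫_0^t a(Y_s) ds + ∫_0^t c(Y_s) dγ_s (no Wiener term), where a is bounded and c is bounded with bounded derivative. Then ‖Y‖_{0,T,∞} ≤ |Y_0| + 2(‖a‖_∞ + K_{θ,μ}‖γ‖_{0,T,μ}‖c‖_∞)(T^θ + T·(2K_{θ,μ}‖γ‖_{0,T,μ}‖c'‖_∞ + 1)^{(1−θ)/μ}), where K_{θ,μ} is the Young integral constant. -/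
open Finset

/-- `I` is the Young integral `∫_a^b Φ dγ`, as a limit of Riemann–Stieltjes sums. -/
def IsYoungIntegral {E F : Type*} [NormedAddCommGroup E] [NormedSpace ℝ E]
    [NormedAddCommGroup F] [NormedSpace ℝ F]
    (Φ : ℝ → E →L[ℝ] F) (γ : ℝ → E) (a b : ℝ) (I : F) : Prop :=
  ∀ ε > 0, ∃ δ > 0, ∀ (n : ℕ) (t : Fin (n + 1) → ℝ), 0 < n → Monotone t →
    t 0 = a → t (Fin.last n) = b →
    (∀ i : Fin n, t i.succ - t i.castSucc ≤ δ) →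
    ‖(∑ i : Fin n, (Φ (t i.castSucc)) (γ (t i.succ) - γ (t i.castSucc))) - I‖ ≤ ε

section LeftRiemannSums

variable {E F : Type*} [NormedAddCommGroup E] [NormedSpace ℝ E]
  [NormedAddCommGroup F] [NormedSpace ℝ F]

/-- The left-point Riemann–Stieltjes sum of `Φ` against `γ` along the points `τ 0, …, τ n`. -/
def leftSum (Φ : ℝ → E →L[ℝ] F) (γ : ℝ → E) (τ : ℕ → ℝ) (n : ℕ) : F :=
  ∑ i ∈ range n, Φ (τ i) (γ (τ (i + 1)) - γ (τ i))

/-- The points dividing `[u, v]` into `m` intervals of equal length. -/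
noncomputable def uniformGrid (u v : ℝ) (m : ℕ) (i : ℕ) : ℝ := u + i * ((v - u) / m)

lemma sum_range_two_mul {M : Type*} [AddCommMonoid M] (f : ℕ → M) (m : ℕ) :
    ∑ i ∈ range (2 * m), f i = ∑ i ∈ range m, (f (2 * i) + f (2 * i + 1)) := by
  induction m with
  | zero => simp
  | succ m ih =>
    rw [mul_add, mul_one, sum_range_succ, sum_range_succ, ih, sum_range_succ, add_assoc]

lemma leftSum_two_mul_sub (Φ : ℝ → E →L[ℝ] F) (γ : ℝ → E) (τ : ℕ → ℝ) (m : ℕ) :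
    leftSum Φ γ τ (2 * m) - leftSum Φ γ (fun i => τ (2 * i)) m =
      ∑ i ∈ range m, (Φ (τ (2 * i + 1)) - Φ (τ (2 * i)))
        (γ (τ (2 * i + 2)) - γ (τ (2 * i + 1))) := by
  unfold leftSum
  rw [sum_range_two_mul, ← sum_sub_distrib]
  refine sum_congr rfl fun i _ => ?_
  simp only [mul_add, mul_one, map_sub, sub_apply, add_assoc, Nat.reduceAdd]
  abel

lemma uniformGrid_two_mul (u v : ℝ) (m i : ℕ) :
    uniformGrid u v (2 * m) (2 * i) = uniformGrid u v m i := by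
  unfold uniformGrid
  push_cast
  rw [mul_comm (2 : ℝ) i, mul_assoc, mul_div_assoc', mul_div_mul_left _ _ two_ne_zero]

lemma uniformGrid_succ_sub (u v : ℝ) (m i : ℕ) :
    uniformGrid u v m (i + 1) - uniformGrid u v m i = (v - u) / m := by
  unfold uniformGrid
  push_cast
  ring

lemma uniformGrid_monotone {u v : ℝ} (huv : u ≤ v) (m : ℕ) : Monotone (uniformGrid u v m) :=
  monotone_nat_of_le_succ fun i => by
    have := uniformGrid_succ_sub u v m i
    have : 0 ≤ (v - u) / m := div_nonneg (by linarith) (Nat.cast_nonneg m)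
    linarith

lemma uniformGrid_zero (u v : ℝ) (m : ℕ) : uniformGrid u v m 0 = u := by
  simp [uniformGrid]

lemma uniformGrid_self (u v : ℝ) {m : ℕ} (hm : 0 < m) : uniformGrid u v m m = v := by
  have : (m : ℝ) ≠ 0 := by positivity
  unfold uniformGrid
  field_simp
  ring

/-- Halving the mesh of a uniform grid changes the Riemann sum by a controlled amount. -/
lemma norm_leftSum_uniformGrid_two_mul_sub_le {Φ : ℝ → E →L[ℝ] F} {γ : ℝ → E}
    {u v θ μ H C : ℝ} (huv : u ≤ v) (hθ : 0 ≤ θ) (hμ : 0 ≤ μ) (hH : 0 ≤ H)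
    (hΦ : ∀ x y, u ≤ x → x ≤ y → y ≤ v → ‖Φ y - Φ x‖ ≤ H * (y - x) ^ θ)
    (hγ : ∀ x y, u ≤ x → x ≤ y → y ≤ v → ‖γ y - γ x‖ ≤ C * (y - x) ^ μ) {m : ℕ} (hm : 0 < m) :
    ‖leftSum Φ γ (uniformGrid u v (2 * m)) (2 * m) - leftSum Φ γ (uniformGrid u v m) m‖ ≤
      m * (H * C * ((v - u) / (2 * m)) ^ (μ + θ)) := by
  set τ := uniformGrid u v (2 * m) with hτ
  have hcoarse : uniformGrid u v m = fun i => τ (2 * i) :=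
    funext fun i => (uniformGrid_two_mul u v m i).symm
  have hmono : Monotone τ := uniformGrid_monotone huv _
  have hstep (i : ℕ) : τ (i + 1) - τ i = (v - u) / (2 * m) := by
    rw [hτ, uniformGrid_succ_sub]
    push_cast
    rfl
  rw [hcoarse, leftSum_two_mul_sub]
  refine (norm_sum_le_of_le (n := fun _ => H * C * ((v - u) / (2 * m)) ^ (μ + θ)) _ ?_).trans
    (by simp)
  intro i hi
  have him : i < m := mem_range.mp hi
  have hlow (j : ℕ) : u ≤ τ j := by
    rw [← uniformGrid_zero u v (2 * m)]
    exact hmono (Nat.zero_le j)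
  have hhigh (j : ℕ) (hj : j ≤ 2 * m) : τ j ≤ v := by
    rw [← uniformGrid_self u v (m := 2 * m) (by omega)]
    exact hmono hj
  have h₁ := hΦ _ _ (hlow (2 * i)) (hmono (Nat.le_succ _)) (hhigh (2 * i + 1) (by omega))
  have h₂ := hγ _ _ (hlow (2 * i + 1)) (hmono (Nat.le_succ _)) (hhigh (2 * i + 2) (by omega))
  rw [Nat.succ_eq_add_one, hstep] at h₁ h₂
  have hL : 0 ≤ (v - u) / (2 * m) := div_nonneg (by linarith) (by positivity)
  calc _ ≤ _ := ContinuousLinearMap.le_opNorm _ _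
    _ ≤ (H * ((v - u) / (2 * m)) ^ θ) * (C * ((v - u) / (2 * m)) ^ μ) :=
      mul_le_mul h₁ h₂ (norm_nonneg _) (by positivity)
    _ = _ := by
      rw [Real.rpow_add_of_nonneg hL hμ hθ]
      ring

/-- The constant in the Young estimate for a sum `p = μ + θ` of Hölder exponents. -/
noncomputable def youngConst (p : ℝ) : ℝ := (1 - (2 : ℝ) ^ (1 - p))⁻¹

lemma two_rpow_one_sub_lt_one_s15 {p : ℝ} (hp : 1 < p) : (2 : ℝ) ^ (1 - p) < 1 :=
  Real.rpow_lt_one_of_one_lt_of_neg one_lt_two (by linarith)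

lemma one_le_youngConst {p : ℝ} (hp : 1 < p) : 1 ≤ youngConst p := by
  have h₀ := Real.rpow_pos_of_pos (two_pos : (0 : ℝ) < 2) (1 - p)
  have h₁ := two_rpow_one_sub_lt_one_s15 hp
  exact (one_le_inv₀ (by linarith)).mpr (by linarith)

lemma two_pow_mul_div_rpow_le {L p : ℝ} (hL : 0 ≤ L) (hp : 0 ≤ p) (n : ℕ) :
    (2 : ℝ) ^ n * (L / (2 * 2 ^ n)) ^ p ≤ L ^ p * ((2 : ℝ) ^ (1 - p)) ^ n := by
  have h2 : ((2 : ℝ) ^ (1 - p)) ^ n = 2 ^ n / ((2 : ℝ) ^ n) ^ p := by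
    rw [Real.rpow_sub two_pos, Real.rpow_one, div_pow, Real.rpow_pow_comm two_pos.le]
  calc (2 : ℝ) ^ n * (L / (2 * 2 ^ n)) ^ p ≤ 2 ^ n * (L / 2 ^ n) ^ p := by
        gcongr
        exact le_mul_of_one_le_left (by positivity) one_le_two
    _ = _ := by
      rw [h2, Real.div_rpow hL (by positivity)]
      ring

/-- The Young estimate for dyadic Riemann sums. -/
lemma norm_leftSum_dyadic_le {Φ : ℝ → E →L[ℝ] F} {γ : ℝ → E}
    {u v θ μ H C M : ℝ} (huv : u ≤ v) (hθ : 0 ≤ θ) (hμ : 0 ≤ μ) (hp : 1 < μ + θ)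
    (hH : 0 ≤ H) (hC : 0 ≤ C) (hM : ‖Φ u‖ ≤ M)
    (hΦ : ∀ x y, u ≤ x → x ≤ y → y ≤ v → ‖Φ y - Φ x‖ ≤ H * (y - x) ^ θ)
    (hγ : ∀ x y, u ≤ x → x ≤ y → y ≤ v → ‖γ y - γ x‖ ≤ C * (y - x) ^ μ) (n : ℕ) :
    ‖leftSum Φ γ (uniformGrid u v (2 ^ n)) (2 ^ n)‖ ≤
      youngConst (μ + θ) * C * (M * (v - u) ^ μ + H * (v - u) ^ (μ + θ)) := by
  have hL : 0 ≤ v - u := by linarith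
  set ρ : ℝ := 2 ^ (1 - (μ + θ)) with hρ
  have hρ0 : 0 ≤ ρ := by positivity
  have hρ1 : ρ < 1 := two_rpow_one_sub_lt_one_s15 hp
  have hpartial (n : ℕ) : ‖leftSum Φ γ (uniformGrid u v (2 ^ n)) (2 ^ n)‖ ≤
      M * (C * (v - u) ^ μ) + H * C * (v - u) ^ (μ + θ) * ∑ k ∈ range n, ρ ^ k := by
    induction n with
    | zero =>
      have h₁ : uniformGrid u v 1 1 = v := uniformGrid_self u v one_pos
      simp only [leftSum, pow_zero, range_one, sum_singleton, zero_add, uniformGrid_zero, h₁,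
        range_zero, sum_empty, mul_zero, add_zero]
      exact (ContinuousLinearMap.le_opNorm _ _).trans
        (mul_le_mul hM (hγ u v le_rfl huv le_rfl) (norm_nonneg _) ((norm_nonneg _).trans hM))
    | succ n ih =>
      have hstep := norm_leftSum_uniformGrid_two_mul_sub_le huv hθ hμ hH hΦ hγ
        (m := 2 ^ n) (by positivity)
      have hscale := two_pow_mul_div_rpow_le (p := μ + θ) hL (by linarith) n
      have hHC : 0 ≤ H * C := mul_nonneg hH hC
      have := mul_le_mul_of_nonneg_left hscale hHC
      push_cast at hstep
      rw [pow_succ' 2 n, sum_range_succ, mul_add]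
      have htri := norm_sub_norm_le (leftSum Φ γ (uniformGrid u v (2 * 2 ^ n)) (2 * 2 ^ n))
        (leftSum Φ γ (uniformGrid u v (2 ^ n)) (2 ^ n))
      linarith
  have hgeom : ∑ k ∈ range n, ρ ^ k ≤ youngConst (μ + θ) := by
    rw [youngConst, ← hρ, ← tsum_geometric_of_lt_one hρ0 hρ1]
    exact (summable_geometric_of_lt_one hρ0 hρ1).sum_le_tsum _ fun _ _ => by positivity
  have hM0 : 0 ≤ M := (norm_nonneg _).trans hM
  have hK := one_le_youngConst hp
  calc _ ≤ _ := hpartial n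
    _ ≤ youngConst (μ + θ) * (M * (C * (v - u) ^ μ)) +
        H * C * (v - u) ^ (μ + θ) * youngConst (μ + θ) := by
      refine add_le_add (le_mul_of_one_le_left ?_ hK) (mul_le_mul_of_nonneg_left hgeom ?_) <;>
        positivity
    _ = _ := by ring

lemma IsYoungIntegral.exists_forall_norm_leftSum_sub_le {Φ : ℝ → E →L[ℝ] F} {γ : ℝ → E}
    {a b : ℝ} {I : F} (h : IsYoungIntegral Φ γ a b I) {ε : ℝ} (hε : 0 < ε) :
    ∃ δ > 0, ∀ (n : ℕ) (τ : ℕ → ℝ), 0 < n → Monotone τ → τ 0 = a → τ n = b →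
      (∀ i < n, τ (i + 1) - τ i ≤ δ) → ‖leftSum Φ γ τ n - I‖ ≤ ε := by
  obtain ⟨δ, hδ, H⟩ := h ε hε
  refine ⟨δ, hδ, fun n τ hn hmono h0 hlast hmesh => ?_⟩
  have := H n (fun i => τ i) hn (fun i j hij => hmono hij) (by simpa using h0)
    (by simpa using hlast) (fun i => by simpa using hmesh i i.2)
  rw [leftSum, ← Fin.sum_univ_eq_sum_range (fun i => Φ (τ i) (γ (τ (i + 1)) - γ (τ i)))]
  simpa using this

/-- The difference of two Young integrals over `[a, u]` and `[a, v]` is approximated by Riemann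
sums along dyadic partitions of `[u, v]`. -/
lemma IsYoungIntegral.exists_norm_leftSum_dyadic_sub_le {Φ : ℝ → E →L[ℝ] F} {γ : ℝ → E}
    {a u v : ℝ} {I J : F} (hI : IsYoungIntegral Φ γ a u I) (hJ : IsYoungIntegral Φ γ a v J)
    (hau : a ≤ u) (huv : u ≤ v) {ε : ℝ} (hε : 0 < ε) :
    ∃ n : ℕ, ‖leftSum Φ γ (uniformGrid u v (2 ^ n)) (2 ^ n) - (J - I)‖ ≤ ε := by
  obtain ⟨δ₁, hδ₁, H₁⟩ := hI.exists_forall_norm_leftSum_sub_le (half_pos hε)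
  obtain ⟨δ₂, hδ₂, H₂⟩ := hJ.exists_forall_norm_leftSum_sub_le (half_pos hε)
  obtain ⟨n, hn⟩ := pow_unbounded_of_one_lt ((v - a) / min δ₁ δ₂) (one_lt_two (α := ℝ))
  have hδ : 0 < min δ₁ δ₂ := lt_min hδ₁ hδ₂
  have hmesh : (v - a) / (2 ^ n : ℕ) ≤ min δ₁ δ₂ := by
    push_cast
    rw [div_le_iff₀ (by positivity), mul_comm]
    exact ((div_lt_iff₀ hδ).mp hn).le
  set N := 2 ^ n
  have hN0 : 0 < N := by positivity
  have hmesh₁ : (u - a) / N ≤ min δ₁ δ₂ := le_trans (by gcongr) hmesh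
  have hmesh₂ : (v - u) / N ≤ min δ₁ δ₂ := le_trans (by gcongr) hmesh
  refine ⟨n, ?_⟩
  let τ : ℕ → ℝ := fun i => if i ≤ N then uniformGrid a u N i else uniformGrid u v N (i - N)
  have hleft (i : ℕ) (hi : i ≤ N) : τ i = uniformGrid a u N i := if_pos hi
  have hright (i : ℕ) : τ (N + i) = uniformGrid u v N i := by
    rcases Nat.eq_zero_or_pos i with rfl | hi
    · rw [add_zero, hleft N le_rfl, uniformGrid_self a u hN0, uniformGrid_zero]
    · simp only [τ, if_neg (show ¬ N + i ≤ N by omega), Nat.add_sub_cancel_left]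
  have hstep (i : ℕ) : τ (i + 1) - τ i = (u - a) / N ∨ τ (i + 1) - τ i = (v - u) / N := by
    rcases lt_or_ge i N with hi | hi
    · left
      rw [hleft i hi.le, hleft (i + 1) hi, uniformGrid_succ_sub]
    · right
      obtain ⟨j, rfl⟩ := Nat.exists_eq_add_of_le hi
      rw [add_assoc, hright, hright, uniformGrid_succ_sub]
  have hmono : Monotone τ := monotone_nat_of_le_succ fun i => by
    have h₁ : 0 ≤ (u - a) / N := div_nonneg (by linarith) (Nat.cast_nonneg N)
    have h₂ : 0 ≤ (v - u) / N := div_nonneg (by linarith) (Nat.cast_nonneg N)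
    rcases hstep i with h | h <;> linarith
  have hsplit : leftSum Φ γ τ (N + N) =
      leftSum Φ γ (uniformGrid a u N) N + leftSum Φ γ (uniformGrid u v N) N := by
    unfold leftSum
    rw [sum_range_add]
    congr 1
    · refine sum_congr rfl fun i hi => ?_
      rw [hleft i (mem_range.mp hi).le, hleft (i + 1) (mem_range.mp hi)]
    · refine sum_congr rfl fun i _ => ?_
      rw [add_assoc, hright, hright]
  have hdist₁ := H₁ N (uniformGrid a u N) hN0 (uniformGrid_monotone hau N) (uniformGrid_zero _ _ _)
    (uniformGrid_self _ _ hN0) fun i _ => by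
      rw [uniformGrid_succ_sub]
      exact hmesh₁.trans (min_le_left _ _)
  have hdist₂ := H₂ (N + N) τ (by omega) hmono
    (by rw [hleft 0 (Nat.zero_le _), uniformGrid_zero])
    (by rw [hright, uniformGrid_self _ _ hN0]) fun i _ => by
      rcases hstep i with h | h <;> rw [h]
      exacts [hmesh₁.trans (min_le_right _ _), hmesh₂.trans (min_le_right _ _)]
  rw [hsplit] at hdist₂
  calc _ = ‖(leftSum Φ γ (uniformGrid a u N) N + leftSum Φ γ (uniformGrid u v N) N - J) -
        (leftSum Φ γ (uniformGrid a u N) N - I)‖ := by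
        congr 1
        abel
    _ ≤ ε / 2 + ε / 2 := (norm_sub_le _ _).trans (add_le_add hdist₂ hdist₁)
    _ = ε := add_halves ε

/-- The Young estimate for increments of the Young integral. -/
lemma IsYoungIntegral.norm_sub_le {Φ : ℝ → E →L[ℝ] F} {γ : ℝ → E}
    {a u v θ μ H C M : ℝ} {I J : F} (hI : IsYoungIntegral Φ γ a u I)
    (hJ : IsYoungIntegral Φ γ a v J) (hau : a ≤ u) (huv : u ≤ v)
    (hθ : 0 ≤ θ) (hμ : 0 ≤ μ) (hp : 1 < μ + θ) (hH : 0 ≤ H) (hC : 0 ≤ C) (hM : ‖Φ u‖ ≤ M)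
    (hΦ : ∀ x y, u ≤ x → x ≤ y → y ≤ v → ‖Φ y - Φ x‖ ≤ H * (y - x) ^ θ)
    (hγ : ∀ x y, u ≤ x → x ≤ y → y ≤ v → ‖γ y - γ x‖ ≤ C * (y - x) ^ μ) :
    ‖J - I‖ ≤ youngConst (μ + θ) * C * (M * (v - u) ^ μ + H * (v - u) ^ (μ + θ)) := by
  refine le_of_forall_pos_le_add fun ε hε => ?_
  obtain ⟨n, hn⟩ := hI.exists_norm_leftSum_dyadic_sub_le hJ hau huv hε
  have hS := norm_leftSum_dyadic_le huv hθ hμ hp hH hC hM hΦ hγ n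
  have := norm_sub_norm_le (J - I) (leftSum Φ γ (uniformGrid u v (2 ^ n)) (2 ^ n))
  rw [norm_sub_rev] at hn
  linarith

end LeftRiemannSums

/-- If the primitive of a bounded function is continuous, then it is Lipschitz, even when the
function fails to be integrable on part of the interval (where the integral is zero by
convention). -/
lemma norm_integral_sub_integral_le_of_continuousOn {E : Type*} [NormedAddCommGroup E]
    [NormedSpace ℝ E] {f : ℝ → E} {M s t : ℝ} (hs : 0 ≤ s) (hst : s ≤ t) (hM : 0 ≤ M)
    (hf : ∀ r, ‖f r‖ ≤ M) (hcont : ContinuousOn (fun x => ∫ r in (0 : ℝ)..x, f r) (Set.Icc s t)) :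
    ‖(∫ r in (0 : ℝ)..t, f r) - ∫ r in (0 : ℝ)..s, f r‖ ≤ M * (t - s) := by
  set P : ℝ → E := fun x => ∫ r in (0 : ℝ)..x, f r with hP
  have hint {x : ℝ} (hsx : s ≤ x) (hx : IntervalIntegrable f MeasureTheory.volume 0 x) :
      ‖P x - P s‖ ≤ M * (x - s) := by
    have hs' : IntervalIntegrable f MeasureTheory.volume 0 s :=
      hx.mono_set (by
        rw [Set.uIcc_of_le hs, Set.uIcc_of_le (hs.trans hsx)]
        exact Set.Icc_subset_Icc_right hsx)
    rw [hP, intervalIntegral.integral_interval_sub_left hx hs',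
      ← abs_of_nonneg (sub_nonneg.mpr hsx)]
    exact intervalIntegral.norm_integral_le_of_norm_le_const fun r _ => hf r
  by_cases ht : IntervalIntegrable f MeasureTheory.volume 0 t
  · exact hint hst ht
  have hclosed₁ : IsClosed {x ∈ Set.Icc s t | ‖P x - P s‖ ≤ M * (x - s)} :=
    isClosed_Icc.isClosed_le (hcont.sub continuousOn_const).norm (by fun_prop)
  have hclosed₂ : IsClosed {x ∈ Set.Icc s t | ‖P x‖ ≤ 0} :=
    isClosed_Icc.isClosed_le hcont.norm continuousOn_const
  have hPt : P t = 0 := intervalIntegral.integral_undef ht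
  obtain ⟨x, hx, hx₁, hx₂⟩ := isPreconnected_closed_iff.mp isPreconnected_Icc _ _ hclosed₁ hclosed₂
    (fun x hx => by
      by_cases hxi : IntervalIntegrable f MeasureTheory.volume 0 x
      · exact Or.inl ⟨hx, hint hx.1 hxi⟩
      · exact Or.inr ⟨hx, (norm_eq_zero.mpr (intervalIntegral.integral_undef hxi)).le⟩)
    ⟨s, Set.left_mem_Icc.mpr hst, Set.left_mem_Icc.mpr hst, by simp⟩
    ⟨t, Set.right_mem_Icc.mpr hst, Set.right_mem_Icc.mpr hst, by simp [hPt]⟩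
  have hPx : P x = P t := by rw [hPt, norm_le_zero_iff.mp hx₂.2]
  change ‖P t - P s‖ ≤ _
  rw [← hPx]
  exact hx₁.2.trans (mul_le_mul_of_nonneg_left (by linarith [hx.2]) hM)

lemma continuousOn_Icc_of_norm_sub_le_rpow {E : Type*} [NormedAddCommGroup E] {f : ℝ → E}
    {D μ T : ℝ} (hμ : 0 < μ)
    (hf : ∀ u v, 0 ≤ u → u ≤ v → v ≤ T → ‖f v - f u‖ ≤ D * (v - u) ^ μ) :
    ContinuousOn f (Set.Icc 0 T) := by
  intro x hx
  have hsymm : ∀ y ∈ Set.Icc 0 T, dist (f y) (f x) ≤ D * |y - x| ^ μ := by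
    intro y hy
    rcases le_total x y with h | h
    · rw [dist_eq_norm, abs_of_nonneg (sub_nonneg.mpr h)]
      exact hf x y hx.1 h hy.2
    · rw [dist_comm, dist_eq_norm, abs_sub_comm, abs_of_nonneg (sub_nonneg.mpr h)]
      exact hf y x hy.1 h hx.2
  have hlim : Filter.Tendsto (fun y => D * |y - x| ^ μ) (nhdsWithin x (Set.Icc 0 T)) (nhds 0) := by
    have hc : Continuous fun y : ℝ => D * |y - x| ^ μ :=
      continuous_const.mul ((by fun_prop : Continuous fun y : ℝ => |y - x|).rpow_const
        fun _ => Or.inr hμ.le)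
    have := hc.tendsto x
    simp only [sub_self, abs_zero, Real.zero_rpow hμ.ne', mul_zero] at this
    exact this.mono_left nhdsWithin_le_nhds
  exact tendsto_iff_dist_tendsto_zero.mpr (squeeze_zero' (Filter.Eventually.of_forall
    fun _ => dist_nonneg) (eventually_nhdsWithin_of_forall hsymm) hlim)

/-- A local Hölder constant that can always be replaced by `A + C / 2` improves to `2 * A`. -/
lemma norm_sub_le_of_forall_halving {E : Type*} [NormedAddCommGroup E] {Y : ℝ → E}
    {A C T θ Δ : ℝ} (hA : 0 ≤ A) (hC : 0 ≤ C)
    (hY : ∀ u v, 0 ≤ u → u ≤ v → v ≤ T → v - u ≤ Δ → ‖Y v - Y u‖ ≤ C * (v - u) ^ θ)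
    (himprove : ∀ B, 0 ≤ B →
      (∀ u v, 0 ≤ u → u ≤ v → v ≤ T → v - u ≤ Δ → ‖Y v - Y u‖ ≤ B * (v - u) ^ θ) →
      ∀ u v, 0 ≤ u → u ≤ v → v ≤ T → v - u ≤ Δ → ‖Y v - Y u‖ ≤ (A + B / 2) * (v - u) ^ θ)
    {u v : ℝ} (hu : 0 ≤ u) (huv : u ≤ v) (hv : v ≤ T) (hΔ : v - u ≤ Δ) :
    ‖Y v - Y u‖ ≤ 2 * A * (v - u) ^ θ := by
  have hiter (n : ℕ) : ∀ u v, 0 ≤ u → u ≤ v → v ≤ T → v - u ≤ Δ →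
      ‖Y v - Y u‖ ≤ (2 * A + C * (1 / 2) ^ n) * (v - u) ^ θ := by
    induction n with
    | zero =>
      intro u v hu huv hv hΔ
      refine (hY u v hu huv hv hΔ).trans ?_
      have : 0 ≤ (v - u) ^ θ := Real.rpow_nonneg (by linarith) _
      gcongr
      simpa using hA
    | succ n ih =>
      intro u v hu huv hv hΔ
      refine (himprove _ (by positivity) ih u v hu huv hv hΔ).trans_eq ?_
      ring
  have hlim : Filter.Tendsto (fun n : ℕ => (2 * A + C * (1 / 2) ^ n) * (v - u) ^ θ) Filter.atTop
      (nhds ((2 * A + C * 0) * (v - u) ^ θ)) :=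
    (((tendsto_pow_atTop_nhds_zero_of_lt_one (by norm_num) (by norm_num)).const_mul C).const_add
      _).mul_const _
  rw [mul_zero, add_zero] at hlim
  exact ge_of_tendsto' hlim fun n => hiter n u v hu huv hv hΔ

/-- Chaining a Hölder estimate valid on intervals of length at most `Δ`. -/
lemma norm_le_of_local_holder {E : Type*} [NormedAddCommGroup E] {Y : ℝ → E}
    {B T θ Δ : ℝ} (hB : 0 ≤ B) (hθ : 0 ≤ θ) (hΔ : 0 < Δ)
    (hY : ∀ u v, 0 ≤ u → u ≤ v → v ≤ T → v - u ≤ Δ → ‖Y v - Y u‖ ≤ B * (v - u) ^ θ)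
    {s : ℝ} (hs : s ∈ Set.Icc 0 T) :
    ‖Y s‖ ≤ ‖Y 0‖ + B * (T ^ θ + T * Δ ^ (θ - 1)) := by
  have hchain (n : ℕ) : n * Δ ≤ T → ‖Y (n * Δ)‖ ≤ ‖Y 0‖ + n * (B * Δ ^ θ) := by
    induction n with
    | zero => simp
    | succ n ih =>
      intro hn
      push_cast at hn ⊢
      have hstep : (n + 1) * Δ - n * Δ = Δ := by ring
      have h₁ := hY (n * Δ) ((n + 1) * Δ) (by positivity) (by linarith) hn hstep.le
      rw [hstep] at h₁
      have h₂ := ih (by linarith)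
      have h₃ := norm_sub_norm_le (Y ((n + 1) * Δ)) (Y (n * Δ))
      linarith
  set n := ⌊s / Δ⌋₊
  have hn : n * Δ ≤ s := (le_div_iff₀ hΔ).mp (Nat.floor_le (div_nonneg hs.1 hΔ.le))
  have hn' : s < (n + 1) * Δ := (div_lt_iff₀ hΔ).mp (Nat.lt_floor_add_one _)
  have hn0 : 0 ≤ n * Δ := by positivity
  have h₁ := hchain n (hn.trans hs.2)
  have h₂ := hY (n * Δ) s hn0 hn hs.2 (by linarith)
  have h₃ := norm_sub_norm_le (Y s) (Y (n * Δ))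
  have h₄ : (s - n * Δ) ^ θ ≤ T ^ θ :=
    Real.rpow_le_rpow (by linarith) (by linarith [hs.2]) hθ
  have h₅ : n * Δ ^ θ ≤ T * Δ ^ (θ - 1) := by
    have : Δ ^ θ = Δ * Δ ^ (θ - 1) := by
      rw [Real.rpow_sub hΔ, Real.rpow_one]
      field_simp
    rw [this, ← mul_assoc]
    exact mul_le_mul_of_nonneg_right (hn.trans hs.2) (by positivity)
  have h₆ := mul_le_mul_of_nonneg_left (add_le_add h₄ h₅) hB
  linarith

theorem stmt15 (μ θ : ℝ) (hμ : 1/2 < μ) (hμ1 : μ < 1) (hθ : 1 - μ < θ) (hθ1 : θ < 1/2) :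
    ∃ K : ℝ, 0 < K ∧
    ∀ (d l : ℕ) (T : ℝ), 0 < T →
    ∀ (γ : ℝ → EuclideanSpace ℝ (Fin l))
      (a : EuclideanSpace ℝ (Fin d) → EuclideanSpace ℝ (Fin d))
      (c : EuclideanSpace ℝ (Fin d) → (EuclideanSpace ℝ (Fin l) →L[ℝ] EuclideanSpace ℝ (Fin d)))
      (Y : ℝ → EuclideanSpace ℝ (Fin d)) (Cγ Ma Mc Lc : ℝ),
      0 ≤ Cγ → 0 ≤ Ma → 0 ≤ Mc → 0 ≤ Lc →
      -- γ is μ-Hölder on [0,T] with constant Cγ: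
      (∀ u v, 0 ≤ u → u ≤ v → v ≤ T → ‖γ v - γ u‖ ≤ Cγ * (v - u) ^ μ) →
      -- a is bounded, c is bounded with bounded derivative (Lipschitz constant Lc):
      (∀ x, ‖a x‖ ≤ Ma) → (∀ x, ‖c x‖ ≤ Mc) →
      (∀ x y, ‖c x - c y‖ ≤ Lc * ‖x - y‖) →
      -- Y solves the Young differential equation Y_t = Y_0 + ∫₀^t a(Y_s) ds + ∫₀^t c(Y_s) dγ_s,
      -- and is a θ-Hölder continuous solution:
      (∀ s ∈ Set.Icc (0:ℝ) T, ∃ I, IsYoungIntegral (fun r => c (Y r)) γ 0 s I ∧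
        Y s = Y 0 + (∫ r in (0:ℝ)..s, a (Y r)) + I) →
      ContinuousOn Y (Set.Icc 0 T) →
      (∃ CY : ℝ, 0 ≤ CY ∧ ∀ u v, 0 ≤ u → u ≤ v → v ≤ T → ‖Y v - Y u‖ ≤ CY * (v - u) ^ θ) →
      ∀ s ∈ Set.Icc (0:ℝ) T,
        ‖Y s‖ ≤ ‖Y 0‖ + 2 * (Ma + K * Cγ * Mc) *
          (T ^ θ + T * (2 * K * Cγ * Lc + 1) ^ ((1 - θ) / μ)) := by
  have hθ0 : 0 < θ := by linarith
  have hμ0 : 0 < μ := by linarith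
  have hp : 1 < μ + θ := by linarith
  have hK1 := one_le_youngConst hp
  refine ⟨youngConst (μ + θ), by linarith, ?_⟩
  intro d l T hT γ a c Y Cγ Ma Mc Lc hCγ hMa hMc hLc hγ ha hc hcLip hsol hYcont ⟨CY, hCY, hY⟩ s hs
  set K := youngConst (μ + θ)
  set G : ℝ → EuclideanSpace ℝ (Fin d) := fun x => Y x - Y 0 - ∫ r in (0:ℝ)..x, a (Y r) with hG
  have hYoung : ∀ x ∈ Set.Icc (0:ℝ) T, IsYoungIntegral (fun r => c (Y r)) γ 0 x (G x) := by
    intro x hx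
    obtain ⟨I, hI, hYx⟩ := hsol x hx
    have : G x = I := by
      simp only [hG]
      rw [hYx]
      abel
    rwa [this]
  have hGle (B u v : ℝ) (hB : 0 ≤ B) (hu : 0 ≤ u) (huv : u ≤ v) (hv : v ≤ T)
      (hYB : ∀ x y, u ≤ x → x ≤ y → y ≤ v → ‖Y y - Y x‖ ≤ B * (y - x) ^ θ) :
      ‖G v - G u‖ ≤ K * Cγ * (Mc * (v - u) ^ μ + Lc * B * (v - u) ^ (μ + θ)) := by
    refine (hYoung u ⟨hu, huv.trans hv⟩).norm_sub_le (hYoung v ⟨hu.trans huv, hv⟩) hu huv hθ0.le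
      hμ0.le hp (mul_nonneg hLc hB) hCγ (hc _) (fun x y hx hxy hy => ?_)
      fun x y hx hxy hy => hγ x y (hu.trans hx) hxy (hy.trans hv)
    rw [mul_assoc]
    exact (hcLip _ _).trans (mul_le_mul_of_nonneg_left (hYB x y hx hxy hy) hLc)
  have hGcont : ContinuousOn G (Set.Icc 0 T) := by
    refine continuousOn_Icc_of_norm_sub_le_rpow (D := K * Cγ * (Mc + Lc * CY * T ^ θ)) hμ0 ?_
    intro u v hu huv hv
    have hL : 0 ≤ v - u := by linarith
    refine (hGle CY u v hCY hu huv hv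
      fun x y hx hxy hy => hY x y (hu.trans hx) hxy (hy.trans hv)).trans ?_
    have hpow : (v - u) ^ θ ≤ T ^ θ := Real.rpow_le_rpow hL (by linarith) hθ0.le
    calc _ = K * Cγ * (Mc + Lc * CY * (v - u) ^ θ) * (v - u) ^ μ := by
          rw [Real.rpow_add_of_nonneg hL hμ0.le hθ0.le]
          ring
      _ ≤ _ := by gcongr
  have hdriftcont : ContinuousOn (fun x => ∫ r in (0:ℝ)..x, a (Y r)) (Set.Icc 0 T) := by
    refine ((hYcont.sub continuousOn_const).sub hGcont).congr (f := fun x => Y x - Y 0 - G x) ?_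
    intro x _
    simp only [hG]
    abel
  set R := 2 * K * Cγ * Lc + 1 with hR
  have hR1 : 1 ≤ R := by
    have : 0 ≤ 2 * K * Cγ * Lc := by positivity
    linarith
  have hR0 : 0 < R := by linarith
  set Δ := R ^ (-1 / μ) with hΔ
  have hΔ0 : 0 < Δ := Real.rpow_pos_of_pos hR0 _
  have hΔ1 : Δ ≤ 1 := Real.rpow_le_one_of_one_le_of_nonpos hR1
    (div_nonpos_of_nonpos_of_nonneg (by norm_num) hμ0.le)
  have hΔμ : Δ ^ μ = R⁻¹ := by
    rw [hΔ, ← Real.rpow_mul hR0.le, div_mul_cancel₀ _ hμ0.ne', Real.rpow_neg_one]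
  have hΔexp : Δ ^ (θ - 1) = R ^ ((1 - θ) / μ) := by
    rw [hΔ, ← Real.rpow_mul hR0.le]
    congr 1
    ring
  have habsorb : K * Cγ * Lc * Δ ^ μ ≤ 1 / 2 := by
    rw [hΔμ, ← div_eq_mul_inv, div_le_iff₀ hR0]
    linarith
  rw [← hΔexp]
  refine norm_le_of_local_holder (by positivity) hθ0.le hΔ0 (fun u v hu huv hv hlen => ?_) hs
  refine norm_sub_le_of_forall_halving (C := CY) (Δ := Δ) (by positivity) hCY
    (fun u v hu huv hv _ => hY u v hu huv hv) ?_ hu huv hv hlen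
  intro B hB hYB u v hu huv hv hlen
  have hL : 0 ≤ v - u := by linarith
  have hL1 : v - u ≤ 1 := hlen.trans hΔ1
  have hdrift := norm_integral_sub_integral_le_of_continuousOn hu huv hMa (fun r => ha (Y r))
    (hdriftcont.mono (Set.Icc_subset_Icc hu hv))
  have hyoung := hGle B u v hB hu huv hv fun x y hx hxy hy =>
    hYB x y (hu.trans hx) hxy (hy.trans hv) (by linarith)
  have hsub : Y v - Y u =
      ((∫ r in (0:ℝ)..v, a (Y r)) - ∫ r in (0:ℝ)..u, a (Y r)) + (G v - G u) := by
    simp only [hG]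
    abel
  have hpow_mono {p : ℝ} (hθp : θ ≤ p) : (v - u) ^ p ≤ (v - u) ^ θ :=
    Real.rpow_le_rpow_of_exponent_ge_of_imp hL hL1 hθp
      fun _ h => absurd h (hθ0.trans_le hθp).ne'
  have hlin : v - u ≤ (v - u) ^ θ := by
    simpa using hpow_mono (p := 1) (by linarith)
  have hμθ : (v - u) ^ μ ≤ (v - u) ^ θ := hpow_mono (by linarith)
  have hμΔ : (v - u) ^ μ ≤ Δ ^ μ := Real.rpow_le_rpow hL hlen hμ0.le
  rw [hsub]
  calc _ ≤ Ma * (v - u) + K * Cγ * (Mc * (v - u) ^ μ + Lc * B * (v - u) ^ (μ + θ)) :=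
        (norm_add_le _ _).trans (add_le_add hdrift hyoung)
    _ = Ma * (v - u) + K * Cγ * Mc * (v - u) ^ μ +
        K * Cγ * Lc * (v - u) ^ μ * (B * (v - u) ^ θ) := by
      rw [Real.rpow_add_of_nonneg hL hμ0.le hθ0.le]
      ring
    _ ≤ Ma * (v - u) ^ θ + K * Cγ * Mc * (v - u) ^ θ + 1 / 2 * (B * (v - u) ^ θ) := by
      gcongr
      exact (mul_le_mul_of_nonneg_left hμΔ (by positivity)).trans habsorb
    _ = _ := by ring
end
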